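/- arXiv:1910.11816 — 2 statements merged into one kernel-verified Lean document; each statement's English description precedes it below -/
import Mathlib

section
/- Let X be a finite set and let A be a nontrivial abelian subgroup of Sym(X) such that: (1) A is 2-orbit-closed, and (2) for every orbit O of A, if the factor group A_O/A_O^* is an elementary abelian 2-group, then A_O is an elementary abelian 2-group (i.e., a(a(x)) = x for all a ∈ A and x ∈ O). Then A is the automorphism group of a 4-coloured graph on X (A ∈ GR(4)). -/
/-- The orbit of a point `x` under a set `G` of permutations of `X`. -/
def orbitOf {X : Type*} (G : Set (Equiv.Perm X)) (x : X) : Set X :=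
  {y | ∃ a ∈ G, a x = y}

/-- A permutation `σ` is 2-orbit-compatible with `G` if for every pair of orbits
`O` and `Q` of `G` there is an element of `G` agreeing with `σ` on `O ∪ Q`. -/
def TwoOrbitCompatible {X : Type*} (G : Set (Equiv.Perm X)) (σ : Equiv.Perm X) : Prop :=
  ∀ x y : X, ∃ a ∈ G, ∀ z ∈ orbitOf G x ∪ orbitOf G y, σ z = a z

/-- A subgroup `A ≤ Sym(X)` is 2-orbit-closed if every permutation that is
2-orbit-compatible with `A` belongs to `A`. -/
def TwoOrbitClosed {X : Type*} (A : Subgroup (Equiv.Perm X)) : Prop :=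
  ∀ σ : Equiv.Perm X, TwoOrbitCompatible (A : Set (Equiv.Perm X)) σ → σ ∈ A

/-- `A` is precisely the automorphism group of the `k`-coloured graph `γ` on `X`. -/
def IsColGraphAutGroup {X : Type*} {k : ℕ} (γ : Sym2 X → Fin k)
    (A : Subgroup (Equiv.Perm X)) : Prop :=
  ∀ σ : Equiv.Perm X, σ ∈ A ↔ ∀ x y : X, x ≠ y → γ s(σ x, σ y) = γ s(x, y)

/-- `A ∈ GR`: `A` is the automorphism group of some coloured graph on `X`. -/
def InGR {X : Type*} (A : Subgroup (Equiv.Perm X)) : Prop :=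
  ∃ k : ℕ, 1 ≤ k ∧ ∃ γ : Sym2 X → Fin k, IsColGraphAutGroup γ A

/-- `A ∈ GR(4)`: `A` is the automorphism group of some 4-coloured graph on `X`. -/
def InGR4 {X : Type*} (A : Subgroup (Equiv.Perm X)) : Prop :=
  ∃ γ : Sym2 X → Fin 4, IsColGraphAutGroup γ A

/-- The factor group `A_O / A_O^*` is an elementary abelian 2-group: for every `a ∈ A`,
the restriction of `a²` to `O` is the restriction of some element of `A` that fixes
every point outside `O`. -/
def FactorIsElem2 {X : Type*} (A : Subgroup (Equiv.Perm X)) (O : Set X) : Prop :=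
  ∀ a ∈ A, ∃ b ∈ A, (∀ z ∈ O, b z = a (a z)) ∧ ∀ z ∉ O, b z = z


/-!
Let `B` be the abelian group acting. Each orbit is identified with the quotient of `B` by the
stabilizer of its points, so a colouring of pairs of points that depends only on their orbits and
on the difference of their coordinates is invariant under `B`. The colours are chosen such that,
conversely, every automorphism `σ` is 2-orbit-compatible with `B`:

* The orbits are arranged in a path. Its starting orbit is recognized by its small degree in colour
  `3`, and consecutive orbits are joined by pairs of colour `3` (colour `2` at the first step), so
  `σ` preserves every orbit.
* Inside an orbit there is a Cayley colouring that forces `σ` to act as a translation. For an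
  elementary abelian 2-group it exists outright. Otherwise inversion preserves every Cayley
  colouring, and it is excluded by pairs of colour `2` between this orbit and another one, whose
  coordinate differences form a generating coset of a cyclic quotient of order greater than `2`.
* Between two orbits with stabilizers `S` and `S'`, colour `1` marks the coordinate differences in
  `S ⊔ S'`, so the translations induced by `σ` on the two orbits come from a common element of `B`.

If an orbit `O` has no possible partner for the pairs of colour `2`, then `A_O / A_O^*` is an
elementary abelian 2-group, because the translation of `O` by a square, extended by the identity, is
2-orbit-compatible. Condition (2) therefore provides partners wherever they are needed.
-/

section IrredundantFamilies

variable {G ι : Type*} [Group G]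

/-- A family of group elements is irredundant if no member lies in the subgroup generated by the
others. -/
def Irredundant (k : ι → G) : Prop :=
  ∀ i, k i ∉ Subgroup.closure (k '' {i}ᶜ)

theorem exists_irredundant_closure_eq [Finite G] (K : Subgroup G) :
    ∃ (n : ℕ) (k : Fin n → G), Subgroup.closure (Set.range k) = K ∧ Irredundant k := by
  obtain ⟨S, hS, hmin⟩ := exists_minimal_of_wellFoundedLT
    (fun S : Set G ↦ Subgroup.closure S = K) ⟨K, Subgroup.closure_eq K⟩
  let e := Finite.equivFin S
  refine ⟨_, fun i ↦ (e.symm i : G), ?_, fun i hi ↦ ?_⟩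
  · rwa [← Function.comp_def, e.symm.surjective.range_comp, Subtype.range_coe]
  · have himage : (fun j ↦ (e.symm j : G)) '' {i}ᶜ = S \ {(e.symm i : G)} := by
      rw [← Function.comp_def, Set.image_comp, Set.image_compl_eq e.symm.bijective,
        Set.image_singleton]
      ext x
      simp
    rw [himage] at hi
    have hgen : S ⊆ Subgroup.closure (S \ {(e.symm i : G)}) := fun x hx ↦ by
      by_cases h : x = e.symm i
      · rwa [h]
      · exact Subgroup.subset_closure ⟨hx, h⟩
    have hclosure : Subgroup.closure (S \ {(e.symm i : G)}) = K :=
      hS ▸ le_antisymm (Subgroup.closure_mono Set.sdiff_subset) ((Subgroup.closure_le _).2 hgen)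
    exact (hmin hclosure Set.sdiff_subset (e.symm i).2).2 rfl

namespace Irredundant

variable {k : ι → G}

theorem mem_of_mem_closure (hk : Irredundant k) {i : ι} {s : Set ι}
    (h : k i ∈ Subgroup.closure (k '' s)) : i ∈ s := by
  by_contra hi
  exact hk i (Subgroup.closure_mono (Set.image_mono (Set.subset_compl_singleton_iff.2 hi)) h)

theorem ne_one (hk : Irredundant k) (i : ι) : k i ≠ 1 := fun h ↦
  hk i (h ▸ one_mem _)

theorem eq_or_eq_of_eq_mul (hk : Irredundant k) {a b c : ι} (h : k a = k b * k c) :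
    a = b ∨ a = c := by
  refine hk.mem_of_mem_closure (s := {b, c}) ?_
  rw [h, Set.image_pair]
  exact mul_mem (Subgroup.subset_closure (by simp)) (Subgroup.subset_closure (by simp))

theorem eq_of_eq_inv (hk : Irredundant k) {a b : ι} (h : k a = (k b)⁻¹) : a = b := by
  refine hk.mem_of_mem_closure (s := {b}) ?_
  rw [h, Set.image_singleton]
  exact inv_mem (Subgroup.mem_closure_singleton_self _)

theorem injective (hk : Irredundant k) : Function.Injective k := fun a b h ↦ by
  refine hk.mem_of_mem_closure (s := {b}) ?_
  rw [h, Set.image_singleton]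
  exact Subgroup.mem_closure_singleton_self _

theorem mul_ne (hk : Irredundant k) {a b c : ι} : k a * k b ≠ k c := by
  intro h
  rcases hk.eq_or_eq_of_eq_mul h.symm with rfl | rfl
  · exact hk.ne_one b (mul_eq_left.1 h)
  · exact hk.ne_one a (mul_eq_right.1 h)

theorem inv_mul_ne (hk : Irredundant k) (a b c : ι) : (k a)⁻¹ * k b ≠ k c := fun h ↦
  hk.mul_ne (inv_mul_eq_iff_eq_mul.1 h).symm

theorem eq_or_eq_or_eq_of_inv_mul_eq (hk : Irredundant k) {a b c d : ι}
    (h : (k a)⁻¹ * k b = (k c)⁻¹ * k d) : b = a ∨ b = c ∨ b = d := by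
  refine hk.mem_of_mem_closure (s := {a, c, d}) ?_
  rw [inv_mul_eq_iff_eq_mul.1 h]
  have hmem {j : ι} (hj : j ∈ ({a, c, d} : Set ι)) :
      k j ∈ Subgroup.closure (k '' {a, c, d}) :=
    Subgroup.subset_closure (Set.mem_image_of_mem k hj)
  exact mul_mem (hmem (by simp)) (mul_mem (inv_mem (hmem (by simp))) (hmem (by simp)))

theorem inv_mul_eq_inv_mul (hk : Irredundant k) {a b c d : ι} (hab : a ≠ b)
    (h : (k a)⁻¹ * k b = (k c)⁻¹ * k d) : a = c ∧ b = d ∨ a = d ∧ b = c := by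
  have hinv : (k b)⁻¹ * k a = (k d)⁻¹ * k c := by
    simpa only [mul_inv_rev, inv_inv] using congrArg (·⁻¹) h
  rcases hk.eq_or_eq_or_eq_of_inv_mul_eq h with rfl | rfl | rfl
  · exact absurd rfl hab
  · rcases hk.eq_or_eq_or_eq_of_inv_mul_eq hinv with rfl | rfl | rfl
    · exact absurd rfl hab
    · exact .inr ⟨rfl, rfl⟩
    · exact absurd rfl hab
  · exact .inl ⟨hk.injective (mul_left_cancel hinv), rfl⟩

end Irredundant

end IrredundantFamilies

theorem inv_mul_mul_left_cancel {G : Type*} [Group G] (c a b : G) :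
    (c * a)⁻¹ * (c * b) = a⁻¹ * b := by
  rw [mul_inv_rev, mul_assoc, inv_mul_cancel_left]

section Links

variable {G : Type*} [Group G] {n : ℕ} {k : Fin n → G}

/-- The differences of consecutive members of a finite sequence, in both directions. Together with
the sequence itself they form the connection set of a Cayley graph in which the neighbourhood of
`1` contains the path `k 0, k 1, …`. -/
def IsLink (k : Fin n → G) (d : G) : Prop :=
  ∃ i j, (SimpleGraph.pathGraph n).Adj i j ∧ d = (k i)⁻¹ * k j

theorem IsLink.inv {d : G} : IsLink k d → IsLink k d⁻¹ := by
  rintro ⟨i, j, hij, rfl⟩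
  exact ⟨j, i, hij.symm, by rw [mul_inv_rev, inv_inv]⟩

theorem isLink_inv_iff {d : G} : IsLink k d⁻¹ ↔ IsLink k d :=
  ⟨fun h ↦ inv_inv d ▸ h.inv, IsLink.inv⟩

theorem Irredundant.isLink_iff_adj (hk : Irredundant k) {a b : Fin n} :
    IsLink k ((k a)⁻¹ * k b) ↔ (SimpleGraph.pathGraph n).Adj a b := by
  refine ⟨?_, fun h ↦ ⟨a, b, h, rfl⟩⟩
  rintro ⟨i, j, hij, h⟩
  rcases hk.inv_mul_eq_inv_mul hij.ne h.symm with ⟨rfl, rfl⟩ | ⟨rfl, rfl⟩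
  · exact hij
  · exact hij.symm

theorem Irredundant.not_isLink (hk : Irredundant k) (i : Fin n) : ¬ IsLink k (k i) := by
  rintro ⟨a, b, -, h⟩
  exact hk.inv_mul_ne a b i h.symm

theorem eq_self_of_pathGraph_hom {f : Fin n → Fin n} (hf : Function.Injective f)
    (hadj : ∀ i j, (SimpleGraph.pathGraph n).Adj i j → (SimpleGraph.pathGraph n).Adj (f i) (f j))
    (hzero : ∀ i : Fin n, i.val = 0 → f i = i) (i : Fin n) : f i = i := by
  obtain ⟨m, hm⟩ := i
  induction m using Nat.strong_induction_on with
  | _ m ih =>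
    obtain _ | m := m
    · exact hzero _ rfl
    have hstep := hadj ⟨m, by omega⟩ ⟨m + 1, hm⟩ (SimpleGraph.pathGraph_adj.2 (.inl rfl))
    rw [ih m (by omega), SimpleGraph.pathGraph_adj] at hstep
    obtain h | h := hstep
    · exact Fin.ext h.symm
    · have hback := ih (f ⟨m + 1, hm⟩) (by dsimp only at h; omega) (Fin.is_lt _)
      have := congrArg Fin.val (hf hback)
      dsimp only at h this
      omega

theorem Irredundant.map_eq_self_of_isLink (hk : Irredundant k) {τ : G → G}
    (hτ : Function.Injective τ) (hrange : ∀ i, τ (k i) ∈ Set.range k)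
    (hlink : ∀ i j, (SimpleGraph.pathGraph n).Adj i j → IsLink k ((τ (k i))⁻¹ * τ (k j)))
    (hzero : ∀ i : Fin n, i.val = 0 → τ (k i) = k i) (i : Fin n) : τ (k i) = k i := by
  choose f hf using hrange
  have hfix : f i = i := by
    refine eq_self_of_pathGraph_hom (fun a b hab ↦ hk.injective (hτ ?_)) (fun a b hab ↦ ?_)
      (fun a ha ↦ hk.injective ?_) i
    · rw [← hf a, ← hf b, hab]
    · rw [← hk.isLink_iff_adj, hf, hf]
      exact hlink a b hab
    · rw [hf, hzero a ha]
  rw [← hf, hfix]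

end Links

section Patterns

variable {G α : Type*} [Group G] {κ : G → α} {R : Set G} {τ : G → G}

/-- The map `τ` preserves the Cayley colour pattern giving distinct `x`, `y` the colour
`κ (x⁻¹ * y)` and also preserves the relation `x⁻¹ * y ∈ R`. The value `κ 1` is immaterial. -/
structure PreservesPattern (κ : G → α) (R : Set G) (τ : G → G) : Prop where
  injective : Function.Injective τ
  color_eq : ∀ x y, x ≠ y → κ ((τ x)⁻¹ * τ y) = κ (x⁻¹ * y)
  mem_iff : ∀ x y, (τ x)⁻¹ * τ y ∈ R ↔ x⁻¹ * y ∈ R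

/-- The pattern `κ` is symmetric and becomes rigid in the presence of the relation `R`: only
translations of `G` preserve both. -/
structure IsRigidPattern (κ : G → α) (R : Set G) : Prop where
  color_inv : ∀ x, κ x⁻¹ = κ x
  eq_translation : ∀ τ, PreservesPattern κ R τ → ∀ x, τ x = τ 1 * x

/-- The number of nontrivial elements of colour `c`, i.e. the degree in colour `c` of the
associated Cayley graph. -/
noncomputable def colorCount (κ : G → α) (c : α) : ℕ :=
  {x | x ≠ 1 ∧ κ x = c}.ncard

namespace PreservesPattern

theorem shift (h : PreservesPattern κ R τ) (x : G) :
    PreservesPattern κ R fun y ↦ (τ x)⁻¹ * τ (x * y) where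
  injective a b hab := mul_left_cancel (h.injective (mul_left_cancel hab))
  color_eq a b hab := by
    have := h.color_eq (x * a) (x * b) (mul_right_injective x |>.ne hab)
    rwa [inv_mul_mul_left_cancel, ← inv_mul_mul_left_cancel (τ x)⁻¹] at this
  mem_iff a b := by
    have := h.mem_iff (x * a) (x * b)
    rwa [inv_mul_mul_left_cancel, ← inv_mul_mul_left_cancel (τ x)⁻¹] at this

theorem color_map (h : PreservesPattern κ R τ) (h1 : τ 1 = 1) {x : G} (hx : x ≠ 1) :
    κ (τ x) = κ x := by
  simpa only [h1, inv_one, one_mul] using h.color_eq 1 x hx.symm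

theorem map_mem_iff (h : PreservesPattern κ R τ) (h1 : τ 1 = 1) {x : G} : τ x ∈ R ↔ x ∈ R := by
  simpa only [h1, inv_one, one_mul] using h.mem_iff 1 x

theorem map_mul_of_fixed {s : G} (hs : ∀ τ, PreservesPattern κ R τ → τ 1 = 1 → τ s = s)
    (h : PreservesPattern κ R τ) (x : G) : τ (x * s) = τ x * s := by
  rw [← inv_mul_eq_iff_eq_mul]
  exact hs _ (h.shift x) (by rw [mul_one, inv_mul_cancel])

end PreservesPattern

namespace IsRigidPattern

theorem of_fixed_generators {T : Set G} (hT : Subgroup.closure T = ⊤)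
    (hinv : ∀ x, κ x⁻¹ = κ x)
    (hfixed : ∀ τ, PreservesPattern κ R τ → τ 1 = 1 → ∀ s ∈ T, τ s = s) :
    IsRigidPattern κ R where
  color_inv := hinv
  eq_translation τ hτ t := by
    suffices h : ∀ x, τ (x * t) = τ x * t by simpa only [one_mul] using h 1
    have ht : t ∈ Subgroup.closure T := hT ▸ Subgroup.mem_top t
    induction ht using Subgroup.closure_induction with
    | mem s hs => exact hτ.map_mul_of_fixed fun τ hτ h1 ↦ hfixed τ hτ h1 s hs
    | one => intro x; rw [mul_one, mul_one]
    | mul a b _ _ ha hb => intro x; rw [← mul_assoc, hb, ha, mul_assoc]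
    | inv a _ ha => intro x; rw [eq_mul_inv_iff_mul_eq, ← ha, inv_mul_cancel_right]

theorem of_empty (h : IsRigidPattern κ ∅) (R : Set G) : IsRigidPattern κ R :=
  ⟨h.color_inv, fun τ hτ ↦ h.eq_translation τ ⟨hτ.injective, hτ.color_eq, fun _ _ ↦ Iff.rfl⟩⟩

theorem comp_injective {β : Type*} (h : IsRigidPattern κ R) {f : α → β}
    (hf : Function.Injective f) : IsRigidPattern (f ∘ κ) R where
  color_inv x := congrArg f (h.color_inv x)
  eq_translation τ hτ := h.eq_translation τ
    ⟨hτ.injective, fun x y hxy ↦ hf (hτ.color_eq x y hxy), hτ.mem_iff⟩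

theorem exists_colorCount_pos [Finite G] [Nontrivial G] (h : IsRigidPattern κ R) (c : α) :
    ∃ κ' : G → α, IsRigidPattern κ' R ∧ 0 < colorCount κ' c := by
  classical
  obtain ⟨q, hq⟩ := exists_ne (1 : G)
  refine ⟨Equiv.swap (κ q) c ∘ κ, h.comp_injective (Equiv.injective _), ?_⟩
  exact (Set.ncard_pos (Set.toFinite _)).2 ⟨q, hq, Equiv.swap_apply_left _ _⟩

end IsRigidPattern

end Patterns

section CosetPatterns

open scoped Pointwise

open scoped Classical in
/-- A pattern on the subgroup generated by an irredundant sequence `k` for which a map permuting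
the members of `k` has to fix each of them: links have colour `1`, and colour `2` marks the end
`k 0` of the path. -/
noncomputable def pathPattern {G : Type*} [CommGroup G] {n : ℕ} (k : Fin n → G) (d : G) : Fin 4 :=
  if ∃ i : Fin n, i.val = 0 ∧ (d = k i ∨ d⁻¹ = k i) then 2 else if IsLink k d then 1 else 0

open scoped Classical in
/-- A pattern on the coset of `g` that singles out `g` by colour `1` and the translate of the
sequence `k` by colour `2`. -/
noncomputable def markedCosetPattern {G ι : Type*} [CommGroup G] (g : G) (k : ι → G) (d : G) :
    Fin 4 :=
  if d = g then 1 else if ∃ i, d = k i * g then 2 else 0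

open scoped Classical in
/-- The pattern on `G` which is `pathPattern` on the subgroup `N`, `markedCosetPattern` on the
coset of `g`, and its mirror image on the coset of `g⁻¹`. -/
noncomputable def cosetPattern {G : Type*} [CommGroup G] (N : Subgroup G) (g : G) {n : ℕ}
    (k : Fin n → G) (d : G) : Fin 4 :=
  if d ∈ N then pathPattern k d
  else if d ∈ g • (N : Set G) then markedCosetPattern g k d
  else if d⁻¹ ∈ g • (N : Set G) then markedCosetPattern g k d⁻¹ else 0

variable {G : Type*} [CommGroup G] {N : Subgroup G} {g d : G} {n : ℕ} {k : Fin n → G}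

open scoped Classical in
theorem pathPattern_inv (k : Fin n → G) (d : G) : pathPattern k d⁻¹ = pathPattern k d := by
  simp only [pathPattern, isLink_inv_iff, inv_inv, or_comm]

theorem pathPattern_eq_two_iff :
    pathPattern k d = 2 ↔ ∃ i : Fin n, i.val = 0 ∧ (d = k i ∨ d⁻¹ = k i) := by
  unfold pathPattern
  split_ifs with h <;> simp [h]

theorem Irredundant.pathPattern_eq_one_iff (hk : Irredundant k) :
    pathPattern k d = 1 ↔ IsLink k d := by
  unfold pathPattern
  split_ifs with hend h
  · obtain ⟨i, -, h | h⟩ := hend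
    · simpa [h] using hk.not_isLink i
    · simpa [← isLink_inv_iff (d := d), h] using hk.not_isLink i
  · simp [h]
  · simp [h]

theorem markedCosetPattern_eq_one_iff : markedCosetPattern g k d = 1 ↔ d = g := by
  unfold markedCosetPattern
  split_ifs with h <;> simp [h]

theorem Irredundant.markedCosetPattern_eq_two_iff (hk : Irredundant k) :
    markedCosetPattern g k d = 2 ↔ ∃ i, d = k i * g := by
  unfold markedCosetPattern
  split_ifs with h h'
  · simp [h, hk.ne_one]
  · simp [h']
  · simp [h']

theorem notMem_of_mul_self_notMem (hg : g * g ∉ N) (hd : d ∈ g • (N : Set G)) : d ∉ N := by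
  rw [mem_leftCoset_iff, SetLike.mem_coe] at hd
  intro h
  have hgN : g ∈ N := inv_mem_iff.1 ((N.mul_mem_cancel_right h).1 hd)
  exact hg (mul_mem hgN hgN)

theorem inv_notMem_of_mul_self_notMem (hg : g * g ∉ N) (hd : d ∈ g • (N : Set G)) :
    d⁻¹ ∉ g • (N : Set G) := by
  rw [mem_leftCoset_iff, SetLike.mem_coe] at hd ⊢
  intro h
  refine hg (inv_mem_iff.1 ?_)
  convert mul_mem hd h using 1
  rw [mul_inv_rev, mul_mul_mul_comm, mul_inv_cancel, mul_one]

theorem cosetPattern_of_mem (hd : d ∈ N) : cosetPattern N g k d = pathPattern k d :=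
  if_pos hd

theorem cosetPattern_of_mem_coset (hg : g * g ∉ N) (hd : d ∈ g • (N : Set G)) :
    cosetPattern N g k d = markedCosetPattern g k d := by
  rw [cosetPattern, if_neg (notMem_of_mul_self_notMem hg hd), if_pos hd]

open scoped Classical in
theorem cosetPattern_inv (hg : g * g ∉ N) (d : G) :
    cosetPattern N g k d⁻¹ = cosetPattern N g k d := by
  have hdisj := inv_notMem_of_mul_self_notMem hg (d := d)
  by_cases h : d ∈ g • (N : Set G) <;>
    simp_all [cosetPattern, pathPattern_inv]

theorem cosetPattern_ne_three (d : G) : cosetPattern N g k d ≠ 3 := by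
  unfold cosetPattern pathPattern markedCosetPattern
  split_ifs <;> decide

section Rigidity

variable {τ : G → G} (hg : g * g ∉ N) (hk : Irredundant k)
  (hN : Subgroup.closure (Set.range k) = N)

include hg in
theorem PreservesPattern.map_cosetRepresentative
    (hτ : PreservesPattern (cosetPattern N g k) (g • (N : Set G)) τ) (h1 : τ 1 = 1) :
    τ g = g := by
  have hmem : g ∈ g • (N : Set G) := mem_own_leftCoset N.toSubmonoid g
  have hcolor := hτ.color_map h1 (x := g) fun h ↦ hg (by rw [h, mul_one]; exact one_mem N)
  rw [cosetPattern_of_mem_coset hg ((hτ.map_mem_iff h1).2 hmem),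
    cosetPattern_of_mem_coset hg hmem, markedCosetPattern_eq_one_iff.2 rfl] at hcolor
  exact markedCosetPattern_eq_one_iff.1 hcolor

include hN in
theorem mem_of_closure_range_eq (i : Fin n) : k i ∈ N :=
  hN ▸ Subgroup.subset_closure (Set.mem_range_self i)

include hg hk hN in
theorem PreservesPattern.map_mem_range
    (hτ : PreservesPattern (cosetPattern N g k) (g • (N : Set G)) τ) (h1 : τ 1 = 1) (i : Fin n) :
    τ (k i) ∈ Set.range k := by
  have hmem : k i * g ∈ g • (N : Set G) := by
    rw [mem_leftCoset_iff, mul_comm, mul_inv_cancel_right]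
    exact mem_of_closure_range_eq hN i
  have hne : k i * g ≠ 1 := fun h ↦ notMem_of_mul_self_notMem hg hmem (h ▸ one_mem N)
  have hcolor := hτ.color_map h1 hne
  rw [cosetPattern_of_mem_coset hg ((hτ.map_mem_iff h1).2 hmem),
    cosetPattern_of_mem_coset hg hmem, hk.markedCosetPattern_eq_two_iff.2 ⟨i, rfl⟩,
    hk.markedCosetPattern_eq_two_iff,
    hτ.map_mul_of_fixed fun τ hτ h1 ↦ hτ.map_cosetRepresentative hg h1] at hcolor
  obtain ⟨j, hj⟩ := hcolor
  exact ⟨j, (mul_right_cancel hj).symm⟩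

include hg hk hN in
theorem PreservesPattern.map_generator
    (hτ : PreservesPattern (cosetPattern N g k) (g • (N : Set G)) τ) (h1 : τ 1 = 1) (i : Fin n) :
    τ (k i) = k i := by
  have hkN := mem_of_closure_range_eq hN
  choose f hf using hτ.map_mem_range hg hk hN h1
  refine hk.map_eq_self_of_isLink hτ.injective (fun i ↦ ⟨f i, hf i⟩) (fun a b hab ↦ ?_)
    (fun a ha ↦ ?_) i
  · have hcolor := hτ.color_eq (k a) (k b) (hk.injective.ne hab.ne)
    rwa [← hf, ← hf, cosetPattern_of_mem (mul_mem (inv_mem (hkN _)) (hkN _)),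
      cosetPattern_of_mem (mul_mem (inv_mem (hkN _)) (hkN _)),
      hk.pathPattern_eq_one_iff.2 ⟨a, b, hab, rfl⟩, hk.pathPattern_eq_one_iff, hf, hf] at hcolor
  · have hcolor := hτ.color_map h1 (hk.ne_one a)
    rw [← hf, cosetPattern_of_mem (hkN _), cosetPattern_of_mem (hkN _),
      pathPattern_eq_two_iff.2 ⟨a, ha, .inl rfl⟩, pathPattern_eq_two_iff] at hcolor
    obtain ⟨b, hb, h⟩ := hcolor
    have hfb : f a = b := h.elim (hk.injective ·) fun h ↦ hk.eq_of_eq_inv (inv_eq_iff_eq_inv.1 h)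
    rw [← hf, hfb, Fin.ext (hb.trans ha.symm)]

end Rigidity

theorem exists_isRigidPattern_coset [Finite G] (hg : g * g ∉ N)
    (hgen : N ⊔ Subgroup.zpowers g = ⊤) :
    ∃ κ : G → Fin 4, IsRigidPattern κ (g • (N : Set G)) ∧ colorCount κ 3 = 0 := by
  obtain ⟨n, k, hN, hk⟩ := exists_irredundant_closure_eq N
  refine ⟨cosetPattern N g k, .of_fixed_generators (T := insert g (Set.range k)) ?_
    (cosetPattern_inv hg) ?_, ?_⟩
  · rw [Set.insert_eq, Subgroup.closure_union, hN, ← Subgroup.zpowers_eq_closure, sup_comm, hgen]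
  · rintro τ hτ h1 _ (rfl | ⟨i, rfl⟩)
    · exact hτ.map_cosetRepresentative hg h1
    · exact hτ.map_generator hg hk hN h1 i
  · simp [colorCount, cosetPattern_ne_three]

end CosetPatterns

section InvolutivePatterns

open scoped Classical in
/-- The pattern of an elementary abelian 2-group with irredundant generators `k`: the members of
`k` get colour `1`, except that colour `3` marks `k 0`, and the links of `k` get colour `2`. -/
noncomputable def involutivePattern {G : Type*} [CommGroup G] {n : ℕ} (k : Fin n → G) (d : G) :
    Fin 4 :=
  if ∃ i : Fin n, i.val = 0 ∧ d = k i then 3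
  else if d ∈ Set.range k then 1 else if IsLink k d then 2 else 0

variable {G : Type*} [CommGroup G] {n : ℕ} {k : Fin n → G} {d : G}

theorem involutivePattern_eq_three_iff :
    involutivePattern k d = 3 ↔ ∃ i : Fin n, i.val = 0 ∧ d = k i := by
  unfold involutivePattern
  split_ifs with h <;> simp [h]

theorem involutivePattern_eq_three_or_one_iff :
    involutivePattern k d = 3 ∨ involutivePattern k d = 1 ↔ d ∈ Set.range k := by
  unfold involutivePattern
  split_ifs with hend h
  · obtain ⟨i, -, rfl⟩ := hend
    simp
  all_goals simp [h]

theorem Irredundant.involutivePattern_eq_one (hk : Irredundant k) {i : Fin n} (hi : i.val ≠ 0) :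
    involutivePattern k (k i) = 1 := by
  refine (involutivePattern_eq_three_or_one_iff.2 ⟨i, rfl⟩).resolve_left fun h ↦ ?_
  obtain ⟨j, hj, hij⟩ := involutivePattern_eq_three_iff.1 h
  exact hi (hk.injective hij ▸ hj)

theorem Irredundant.involutivePattern_eq_two_iff (hk : Irredundant k) :
    involutivePattern k d = 2 ↔ IsLink k d := by
  unfold involutivePattern
  split_ifs with hend hd h
  · obtain ⟨i, -, rfl⟩ := hend
    simp [hk.not_isLink]
  · obtain ⟨i, rfl⟩ := hd
    simp [hk.not_isLink]
  all_goals simp [h]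

theorem Irredundant.isRigidPattern_involutivePattern (hk : Irredundant k)
    (hgen : Subgroup.closure (Set.range k) = ⊤) (hinv : ∀ x : G, x⁻¹ = x) :
    IsRigidPattern (involutivePattern k) ∅ := by
  refine .of_fixed_generators hgen (fun x ↦ by rw [hinv]) ?_
  rintro τ hτ h1 _ ⟨i, rfl⟩
  refine hk.map_eq_self_of_isLink hτ.injective (fun a ↦ ?_) (fun a b hab ↦ ?_) (fun a ha ↦ ?_) i
  · rw [← involutivePattern_eq_three_or_one_iff, hτ.color_map h1 (hk.ne_one a),
      involutivePattern_eq_three_or_one_iff]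
    exact ⟨a, rfl⟩
  · rw [← hk.involutivePattern_eq_two_iff, hτ.color_eq _ _ (hk.injective.ne hab.ne),
      hk.involutivePattern_eq_two_iff]
    exact ⟨a, b, hab, rfl⟩
  · have hcolor := hτ.color_map h1 (hk.ne_one a)
    rw [involutivePattern_eq_three_iff.2 ⟨a, ha, rfl⟩, involutivePattern_eq_three_iff] at hcolor
    obtain ⟨b, hb, h⟩ := hcolor
    rw [h, Fin.ext (hb.trans ha.symm)]

theorem zpow_eq_one_or_self_of_inv_eq {x : G} (hx : x⁻¹ = x) (m : ℤ) : x ^ m = 1 ∨ x ^ m = x := by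
  have hsq : x ^ (2 : ℤ) = 1 := by rw [zpow_two, ← inv_eq_iff_mul_eq_one, hx]
  obtain ⟨l, rfl | rfl⟩ := Int.even_or_odd' m
  · exact .inl (by rw [zpow_mul, hsq, one_zpow])
  · exact .inr (by rw [zpow_add_one, zpow_mul, hsq, one_zpow, one_mul])

theorem mem_range_or_isLink (hn : n ≤ 2) (hgen : Subgroup.closure (Set.range k) = ⊤)
    (hinv : ∀ x : G, x⁻¹ = x) (hd : d ≠ 1) : d ∈ Set.range k ∨ IsLink k d := by
  have hmem : d ∈ Subgroup.closure (Set.range k) := hgen ▸ Subgroup.mem_top d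
  obtain rfl | hpos := n.eq_zero_or_pos
  · rw [Set.range_eq_empty, Subgroup.closure_empty] at hmem
    exact absurd (Subgroup.mem_bot.1 hmem) hd
  let first : Fin n := ⟨0, hpos⟩
  let last : Fin n := ⟨n - 1, by omega⟩
  have hrange : Set.range k ⊆ {k first, k last} := by
    rintro _ ⟨i, rfl⟩
    obtain h | h : i = first ∨ i = last := by
      simp only [Fin.ext_iff, first, last]
      omega
    · exact .inl (congrArg k h)
    · exact .inr (congrArg k h)
  obtain ⟨a, b, rfl⟩ := Subgroup.mem_closure_pair.1 (Subgroup.closure_mono hrange hmem)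
  obtain h0 | h0 := zpow_eq_one_or_self_of_inv_eq (hinv (k first)) a <;>
    obtain h1 | h1 := zpow_eq_one_or_self_of_inv_eq (hinv (k last)) b <;> rw [h0, h1] at hd ⊢
  · exact absurd (mul_one 1) hd
  · exact .inl ⟨last, (one_mul _).symm⟩
  · exact .inl ⟨first, (mul_one _).symm⟩
  · refine .inr ⟨first, last, SimpleGraph.pathGraph_adj.2 (.inl ?_), by rw [hinv]⟩
    have hne : first ≠ last := fun h ↦ hd (by rw [h, mul_eq_one_iff_eq_inv, hinv])
    simp only [ne_eq, Fin.ext_iff, first, last] at hne ⊢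
    omega

theorem exists_isRigidPattern_of_inv_eq_self [Finite G] (hinv : ∀ x : G, x⁻¹ = x) :
    (∃ κ : G → Fin 4, IsRigidPattern κ ∅ ∧ colorCount κ 3 = 0) ∨
      (∃ κ : G → Fin 4, IsRigidPattern κ ∅ ∧ colorCount κ 3 < 2) ∧
        ∃ κ : G → Fin 4, IsRigidPattern κ ∅ ∧ 2 ≤ colorCount κ 3 := by
  obtain ⟨n, k, hgen, hk⟩ := exists_irredundant_closure_eq (⊤ : Subgroup G)
  have hrigid := hk.isRigidPattern_involutivePattern hgen hinv
  obtain hn | hn := le_or_gt n 2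
  · refine .inl ⟨Equiv.swap 0 3 ∘ involutivePattern k,
      hrigid.comp_injective (Equiv.injective _), ?_⟩
    rw [colorCount, Set.ncard_eq_zero (Set.toFinite _), Set.eq_empty_iff_forall_notMem]
    rintro d ⟨hd, hcolor⟩
    have hzero : involutivePattern k d = 0 := Equiv.swap_apply_eq_iff.1 hcolor
    have hmem := mem_range_or_isLink hn hgen hinv hd
    rw [← involutivePattern_eq_three_or_one_iff, ← hk.involutivePattern_eq_two_iff, hzero] at hmem
    simp at hmem
  · refine .inr ⟨⟨_, hrigid, ?_⟩, Equiv.swap 1 3 ∘ involutivePattern k,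
      hrigid.comp_injective (Equiv.injective _), ?_⟩
    · rw [colorCount, Nat.lt_succ_iff, Set.ncard_le_one]
      rintro x ⟨-, hx⟩ y ⟨-, hy⟩
      obtain ⟨i, hi, rfl⟩ := involutivePattern_eq_three_iff.1 hx
      obtain ⟨j, hj, rfl⟩ := involutivePattern_eq_three_iff.1 hy
      rw [Fin.ext (hi.trans hj.symm)]
    · have hone (i : Fin n) (hi : i.val ≠ 0) :
          (Equiv.swap 1 3 ∘ involutivePattern k) (k i) = 3 := by
        rw [Function.comp_apply, hk.involutivePattern_eq_one hi, Equiv.swap_apply_left]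
      refine (Set.one_lt_ncard (Set.toFinite _)).2 ⟨k ⟨1, by omega⟩,
        ⟨hk.ne_one _, hone _ one_ne_zero⟩, k ⟨2, hn⟩, ⟨hk.ne_one _, hone _ two_ne_zero⟩,
        hk.injective.ne ?_⟩
      simp

end InvolutivePatterns

section GeneratingCosets

open scoped Pointwise

/-- `W` is a coset of a subgroup containing `S` that generates the quotient by this subgroup, the
quotient being cyclic of order greater than `2`. The order condition, stated for a representative
`g` as `g * g ∉ N`, makes `W` an asymmetric relation. -/
def IsGeneratingCoset {B : Type*} [CommGroup B] (S : Subgroup B) (W : Set B) : Prop :=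
  ∃ (N : Subgroup B) (g : B),
    S ≤ N ∧ g * g ∉ N ∧ N ⊔ Subgroup.zpowers g = ⊤ ∧ W = g • (N : Set B)

variable {B : Type*} [CommGroup B] {S : Subgroup B} {W : Set B}

theorem inv_mem_inv_leftCoset_iff {N : Subgroup B} {g d : B} :
    d⁻¹ ∈ g • (N : Set B) ↔ d ∈ g⁻¹ • (N : Set B) := by
  rw [mem_leftCoset_iff, mem_leftCoset_iff, SetLike.mem_coe, SetLike.mem_coe, ← N.inv_mem_iff,
    mul_inv_rev, inv_inv, inv_inv, mul_comm]

theorem exists_isGeneratingCoset [Finite B] {a : B} (ha : a * a ∉ S) :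
    ∃ W, IsGeneratingCoset S W := by
  have hne : ((a * a : B) : B ⧸ S) ≠ 1 := by rwa [Ne, QuotientGroup.eq_one_iff]
  obtain ⟨ψ, hψ⟩ := CommGroup.exists_apply_ne_one_of_hasEnoughRootsOfUnity (B ⧸ S) ℂ hne
  let φ : B →* ℂˣ := ψ.comp (QuotientGroup.mk' S)
  have : Finite φ.range := Finite.of_surjective φ.rangeRestrict φ.rangeRestrict_surjective
  obtain ⟨⟨_, g, rfl⟩, hg⟩ := IsCyclic.exists_generator (α := φ.range)
  have hpow (x : B) : ∃ n : ℤ, φ g ^ n = φ x := by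
    obtain ⟨n, hn⟩ := Subgroup.mem_zpowers_iff.1 (hg ⟨φ x, x, rfl⟩)
    exact ⟨n, congrArg Subtype.val hn⟩
  refine ⟨_, φ.ker, g, fun s hs ↦ ?_, fun h ↦ hψ ?_, eq_top_iff.2 fun x _ ↦ ?_, rfl⟩
  · rw [MonoidHom.mem_ker, MonoidHom.comp_apply, QuotientGroup.mk'_apply,
      (QuotientGroup.eq_one_iff s).2 hs, map_one]
  · obtain ⟨n, hn⟩ := hpow a
    rw [MonoidHom.mem_ker, map_mul] at h
    change φ (a * a) = 1
    rw [map_mul, ← hn, ← mul_zpow, h, one_zpow]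
  · obtain ⟨n, hn⟩ := hpow x
    refine Subgroup.mem_sup.2 ⟨x * (g ^ n)⁻¹, ?_, g ^ n, ⟨n, rfl⟩, inv_mul_cancel_right _ _⟩
    rw [MonoidHom.mem_ker, map_mul, map_inv, map_zpow, hn, mul_inv_cancel]

namespace IsGeneratingCoset

theorem inv (hW : IsGeneratingCoset S W) : IsGeneratingCoset S W⁻¹ := by
  obtain ⟨N, g, hS, hg, hgen, rfl⟩ := hW
  refine ⟨N, g⁻¹, hS, ?_, ?_, Set.ext fun d ↦ ?_⟩
  · rwa [← mul_inv, N.inv_mem_iff]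
  · rwa [Subgroup.zpowers_inv]
  · rw [Set.mem_inv, inv_mem_inv_leftCoset_iff]

theorem nonempty (hW : IsGeneratingCoset S W) : W.Nonempty := by
  obtain ⟨N, g, -, -, -, rfl⟩ := hW
  exact ⟨g, mem_own_leftCoset N.toSubmonoid g⟩

theorem mul_mem_iff (hW : IsGeneratingCoset S W) {s : B} (hs : s ∈ S) {d : B} :
    d * s ∈ W ↔ d ∈ W := by
  obtain ⟨N, g, hS, -, -, rfl⟩ := hW
  rw [mem_leftCoset_iff, mem_leftCoset_iff, ← mul_assoc]
  exact N.mul_mem_cancel_right (hS hs)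

theorem notMem (hW : IsGeneratingCoset S W) {s : B} (hs : s ∈ S) : s ∉ W := by
  obtain ⟨N, g, hS, hg, -, rfl⟩ := hW
  exact fun h ↦ notMem_of_mul_self_notMem hg h (hS hs)

theorem inv_notMem (hW : IsGeneratingCoset S W) {d : B} (hd : d ∈ W) : d⁻¹ ∉ W := by
  obtain ⟨N, g, -, hg, -, rfl⟩ := hW
  exact inv_notMem_of_mul_self_notMem hg hd

theorem exists_notMem (hW : IsGeneratingCoset S W) : ∃ d, d ∉ S ∧ d ∉ W := by
  obtain ⟨d, hd⟩ := hW.nonempty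
  exact ⟨d⁻¹, fun h ↦ hW.notMem (inv_mem_iff.1 h) hd, hW.inv_notMem hd⟩

theorem exists_isRigidPattern [Finite B] (hW : IsGeneratingCoset S W) {K : Subgroup B}
    (hK : K ≤ S) : ∃ κ : B ⧸ K → Fin 4,
      IsRigidPattern κ (((↑) : B → B ⧸ K) '' W) ∧ colorCount κ 3 = 0 := by
  obtain ⟨N, g, hS, hg, hgen, rfl⟩ := hW
  have himage : ((↑) : B → B ⧸ K) '' (g • (N : Set B)) =
      (g : B ⧸ K) • ((N.map (QuotientGroup.mk' K) : Subgroup (B ⧸ K)) : Set (B ⧸ K)) :=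
    Set.image_smul_comm _ g _ fun _ ↦ rfl
  rw [himage]
  refine exists_isRigidPattern_coset (fun h ↦ hg ?_) ?_
  · rw [← QuotientGroup.mk_mul, ← QuotientGroup.mk'_apply, ← Subgroup.mem_comap,
      Subgroup.comap_map_eq_self] at h
    · exact h
    · rw [QuotientGroup.ker_mk']
      exact hK.trans hS
  · have := congrArg (Subgroup.map (QuotientGroup.mk' K)) hgen
    rwa [Subgroup.map_sup, MonoidHom.map_zpowers,
      Subgroup.map_top_of_surjective _ (QuotientGroup.mk'_surjective K)] at this

end IsGeneratingCoset

end GeneratingCosets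

section ColorAutomorphisms

variable {X α : Type*} {γ : Sym2 X → α} {σ : Equiv.Perm X}

/-- The permutation `σ` is an automorphism of the coloured graph `γ`; the colour of a loop is
immaterial. -/
def IsColorAut (γ : Sym2 X → α) (σ : Equiv.Perm X) : Prop :=
  ∀ x y, x ≠ y → γ s(σ x, σ y) = γ s(x, y)

/-- The number of neighbours of `x` joined to it by the colour `c`. -/
noncomputable def colorDegree (γ : Sym2 X → α) (c : α) (x : X) : ℕ :=
  {y | y ≠ x ∧ γ s(x, y) = c}.ncard

theorem IsColorAut.symm (hσ : IsColorAut γ σ) : IsColorAut γ σ.symm := fun x y hxy ↦ by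
  simpa using (hσ (σ.symm x) (σ.symm y) (σ.symm.injective.ne hxy)).symm

theorem IsColorAut.colorDegree_apply (hσ : IsColorAut γ σ) (c : α) (x : X) :
    colorDegree γ c (σ x) = colorDegree γ c x := by
  have himage : {y | y ≠ σ x ∧ γ s(σ x, y) = c} = σ '' {y | y ≠ x ∧ γ s(x, y) = c} := by
    ext y
    obtain ⟨y, rfl⟩ := σ.surjective y
    rw [σ.injective.mem_set_image]
    change σ y ≠ σ x ∧ _ ↔ y ≠ x ∧ _
    rw [σ.injective.ne_iff]
    exact and_congr_right fun hy ↦ by rw [hσ x y hy.symm]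
  rw [colorDegree, himage, Set.ncard_image_of_injective _ σ.injective, colorDegree]

end ColorAutomorphisms

section OrbitCoordinates

/-- The set of orbits of `B` on `X`. -/
abbrev OrbitSpace (B X : Type*) [CommGroup B] [MulAction B X] := MulAction.orbitRel.Quotient B X

/-- The orbit of a point, as an element of `OrbitSpace B X`. -/
def orb (B : Type*) {X : Type*} [CommGroup B] [MulAction B X] (x : X) : OrbitSpace B X :=
  Quotient.mk'' x

variable {B X : Type*} [CommGroup B] [MulAction B X]

/-- The stabilizer of the chosen base point of an orbit; since `B` is commutative it is the
pointwise stabilizer of the orbit. -/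
noncomputable abbrev orbStab (ω : OrbitSpace B X) : Subgroup B :=
  MulAction.stabilizer B ω.out

/-- The identification of an orbit with the quotient of `B` by its stabilizer, given by the base
point `ω.out`. -/
noncomputable def orbPoint (ω : OrbitSpace B X) : B ⧸ orbStab ω → X :=
  MulAction.ofQuotientStabilizer B ω.out

theorem orb_eq_orb_iff {x y : X} : orb B x = orb B y ↔ ∃ b : B, b • y = x := by
  rw [orb, orb, Quotient.eq'', MulAction.orbitRel_apply, MulAction.mem_orbit_iff]

theorem orb_smul (b : B) (x : X) : orb B (b • x) = orb B x :=
  orb_eq_orb_iff.2 ⟨b, rfl⟩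

theorem orb_orbPoint (ω : OrbitSpace B X) (q : B ⧸ orbStab ω) : orb B (orbPoint ω q) = ω := by
  induction q using QuotientGroup.induction_on with
  | _ a => exact (orb_smul a _).trans (Quotient.out_eq' ω)

theorem orbPoint_injective (ω : OrbitSpace B X) : Function.Injective (orbPoint ω) :=
  MulAction.injective_ofQuotientStabilizer B ω.out

theorem exists_orbPoint_eq {ω : OrbitSpace B X} {x : X} (hx : orb B x = ω) :
    ∃ a : B, orbPoint ω a = x := by
  rw [← Quotient.out_eq' ω] at hx
  exact orb_eq_orb_iff.1 hx

theorem smul_orbPoint (ω : OrbitSpace B X) (b a : B) :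
    b • orbPoint ω a = orbPoint ω ((b * a : B) : B ⧸ orbStab ω) :=
  (mul_smul b a ω.out).symm

theorem orbPoint_eq_orbPoint_iff {ω : OrbitSpace B X} {a b : B} :
    orbPoint ω a = orbPoint ω b ↔ a⁻¹ * b ∈ orbStab ω := by
  rw [(orbPoint_injective ω).eq_iff, QuotientGroup.eq]

/-- An element of `B` carrying the base point of the orbit of `x` to `x`. -/
noncomputable def coord (B : Type*) {X : Type*} [CommGroup B] [MulAction B X] (x : X) : B :=
  (exists_orbPoint_eq (ω := orb B x) rfl).choose

theorem orbPoint_coord (x : X) : orbPoint (orb B x) (coord B x) = x :=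
  (exists_orbPoint_eq (ω := orb B x) rfl).choose_spec

theorem smul_eq_smul_of_inv_mul_mem {s t : B} {x : X} (h : s⁻¹ * t ∈ orbStab (orb B x)) :
    s • x = t • x := by
  rw [← orbPoint_coord (B := B) x, smul_orbPoint, smul_orbPoint, orbPoint_eq_orbPoint_iff,
    mul_comm s, mul_comm t, inv_mul_mul_left_cancel]
  exact h

theorem mem_orbitOf_range_iff {x z : X} :
    z ∈ orbitOf ((MulAction.toPermHom B X).range : Set (Equiv.Perm X)) x ↔ orb B z = orb B x := by
  rw [orb_eq_orb_iff]
  constructor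
  · rintro ⟨_, ⟨b, rfl⟩, h⟩
    exact ⟨b, h⟩
  · rintro ⟨b, h⟩
    exact ⟨_, ⟨b, rfl⟩, h⟩

theorem exists_inv_mul_mem {ω ω' : OrbitSpace B X} {s t : B}
    (h : s⁻¹ * t ∈ orbStab ω ⊔ orbStab ω') :
    ∃ b, s⁻¹ * b ∈ orbStab ω ∧ t⁻¹ * b ∈ orbStab ω' := by
  obtain ⟨u, hu, v, hv, huv⟩ := Subgroup.mem_sup.1 h
  refine ⟨s * u, by rwa [inv_mul_cancel_left], ?_⟩
  rwa [← mul_assoc, ← inv_mem_iff, mul_inv_rev, mul_inv_rev, inv_inv, ← huv, inv_mul_cancel_left]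

theorem twoOrbitCompatible_of_translations {σ : Equiv.Perm X} (t : OrbitSpace B X → B)
    (hσ : ∀ x, σ x = t (orb B x) • x)
    (ht : ∀ ω ω', ω ≠ ω' → (t ω)⁻¹ * t ω' ∈ orbStab ω ⊔ orbStab ω') :
    TwoOrbitCompatible ((MulAction.toPermHom B X).range : Set (Equiv.Perm X)) σ := by
  intro x y
  have hsup : (t (orb B x))⁻¹ * t (orb B y) ∈ orbStab (orb B x) ⊔ orbStab (orb B y) := by
    obtain h | h := eq_or_ne (orb B x) (orb B y)
    · rw [h, inv_mul_cancel]
      exact one_mem _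
    · exact ht _ _ h
  obtain ⟨b, hx, hy⟩ := exists_inv_mul_mem hsup
  refine ⟨_, ⟨b, rfl⟩, fun z hz ↦ ?_⟩
  rw [hσ, MulAction.toPermHom_apply, MulAction.toPerm_apply]
  obtain hz | hz := hz <;> rw [mem_orbitOf_range_iff] at hz <;> rw [hz]
  · exact smul_eq_smul_of_inv_mul_mem (hz ▸ hx)
  · exact smul_eq_smul_of_inv_mul_mem (hz ▸ hy)

end OrbitCoordinates

section ColorMatrices

variable {B X α : Type*} [CommGroup B] [MulAction B X] {p : OrbitSpace B X → OrbitSpace B X → B → α}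

/-- `p ω ω' d` is meant as the colour between the points with coordinates `a` in `ω` and `b` in
`ω'`, where `d = a⁻¹ * b`. The conditions say that it is symmetric and depends on the points
only. -/
structure IsColorMatrix (p : OrbitSpace B X → OrbitSpace B X → B → α) : Prop where
  color_inv : ∀ ω ω' d, p ω' ω d⁻¹ = p ω ω' d
  color_mul : ∀ ω ω' d, ∀ s ∈ orbStab ω', p ω ω' (d * s) = p ω ω' d

namespace IsColorMatrix

/-- The coloured graph on `X` described by a colour matrix. -/
noncomputable def graph (hp : IsColorMatrix p) : Sym2 X → α :=
  Sym2.lift ⟨fun x y ↦ p (orb B x) (orb B y) ((coord B x)⁻¹ * coord B y), fun x y ↦ by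
    beta_reduce
    rw [← hp.color_inv, mul_inv_rev, inv_inv]⟩

theorem color_eq_of_orbPoint_eq (hp : IsColorMatrix p) {ω ω' : OrbitSpace B X} {a a' b b' : B}
    (ha : orbPoint ω a = orbPoint ω a') (hb : orbPoint ω' b = orbPoint ω' b') :
    p ω ω' (a⁻¹ * b) = p ω ω' (a'⁻¹ * b') := by
  rw [orbPoint_eq_orbPoint_iff] at ha hb
  rw [← hp.color_mul _ _ _ _ hb, mul_assoc, mul_inv_cancel_left, ← hp.color_inv, mul_inv_rev,
    inv_inv, ← hp.color_mul _ _ _ _ ha, mul_assoc, mul_inv_cancel_left, ← hp.color_inv,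
    mul_inv_rev, inv_inv]

theorem graph_orbPoint (hp : IsColorMatrix p) (ω ω' : OrbitSpace B X) (a b : B) :
    hp.graph s(orbPoint ω a, orbPoint ω' b) = p ω ω' (a⁻¹ * b) := by
  have ha := orbPoint_coord (B := B) (orbPoint ω a)
  have hb := orbPoint_coord (B := B) (orbPoint ω' b)
  rw [orb_orbPoint] at ha hb
  simp only [graph, Sym2.lift_mk, orb_orbPoint]
  exact hp.color_eq_of_orbPoint_eq ha hb

theorem isColorAut_smul (hp : IsColorMatrix p) (b : B) :
    IsColorAut hp.graph (MulAction.toPerm b) := fun x y _ ↦ by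
  rw [MulAction.toPerm_apply, MulAction.toPerm_apply, ← orbPoint_coord (B := B) x,
    ← orbPoint_coord (B := B) y, smul_orbPoint, smul_orbPoint, graph_orbPoint, graph_orbPoint,
    inv_mul_mul_left_cancel]

theorem exists_smul_eq_of_isRigidPattern (hp : IsColorMatrix p) {ω : OrbitSpace B X}
    {κ : B ⧸ orbStab ω → α} (hκ : ∀ d : B, p ω ω d = κ d) {R : Set (B ⧸ orbStab ω)}
    (hrigid : IsRigidPattern κ R) {σ : Equiv.Perm X} (hσ : IsColorAut hp.graph σ)
    (horb : ∀ x, orb B (σ x) = orb B x)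
    (hR : ∀ q r q' r', σ (orbPoint ω q) = orbPoint ω q' → σ (orbPoint ω r) = orbPoint ω r' →
      (q'⁻¹ * r' ∈ R ↔ q⁻¹ * r ∈ R)) :
    ∃ t : B, ∀ x, orb B x = ω → σ x = t • x := by
  have hτ (q : B ⧸ orbStab ω) : ∃ r : B ⧸ orbStab ω, orbPoint ω r = σ (orbPoint ω q) := by
    obtain ⟨b, hb⟩ := exists_orbPoint_eq ((horb _).trans (orb_orbPoint ω q))
    exact ⟨b, hb⟩
  choose τ hτ using hτ
  have hpres : PreservesPattern κ R τ := by
    refine ⟨fun q r h ↦ ?_, fun q r hqr ↦ ?_, fun q r ↦ hR q r _ _ (hτ q).symm (hτ r).symm⟩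
    · refine orbPoint_injective ω (σ.injective ?_)
      rw [← hτ, ← hτ, h]
    · have hgraph (q r : B ⧸ orbStab ω) :
          hp.graph s(orbPoint ω q, orbPoint ω r) = κ (q⁻¹ * r) := by
        induction q using QuotientGroup.induction_on
        induction r using QuotientGroup.induction_on
        rw [hp.graph_orbPoint, hκ, QuotientGroup.mk_mul, QuotientGroup.mk_inv]
      rw [← hgraph, ← hgraph, hτ, hτ]
      exact hσ _ _ ((orbPoint_injective ω).ne hqr)
  obtain ⟨t, ht⟩ := QuotientGroup.mk_surjective (τ 1)
  refine ⟨t, fun x hx ↦ ?_⟩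
  obtain ⟨a, rfl⟩ := exists_orbPoint_eq hx
  rw [← hτ, hrigid.eq_translation τ hpres, ← ht, smul_orbPoint, QuotientGroup.mk_mul]

end IsColorMatrix

end ColorMatrices

section ColorMatrices

variable {B X α : Type*} [CommGroup B] [MulAction B X] {p : OrbitSpace B X → OrbitSpace B X → B → α}

namespace IsColorMatrix

theorem exists_color_eq (hp : IsColorMatrix p) (x : X) (ω' : OrbitSpace B X) (d : B) :
    ∃ y, orb B y = ω' ∧ hp.graph s(x, y) = p (orb B x) ω' d := by
  obtain ⟨a, ha⟩ := exists_orbPoint_eq (B := B) (x := x) rfl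
  refine ⟨orbPoint ω' ((a * d : B) : B ⧸ orbStab ω'), orb_orbPoint _ _, ?_⟩
  conv_lhs => rw [← ha]
  rw [hp.graph_orbPoint, inv_mul_cancel_left]

theorem ncard_color_eq (hp : IsColorMatrix p) {ω : OrbitSpace B X} {κ : B ⧸ orbStab ω → α}
    (hκ : ∀ d : B, p ω ω d = κ d) (c : α) {x : X} (hx : orb B x = ω) :
    {y | orb B y = ω ∧ y ≠ x ∧ hp.graph s(x, y) = c}.ncard = colorCount κ c := by
  obtain ⟨a, rfl⟩ := exists_orbPoint_eq hx
  have hinj : Function.Injective fun q : B ⧸ orbStab ω ↦ orbPoint ω (a * q) :=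
    (orbPoint_injective ω).comp (mul_right_injective _)
  rw [colorCount, ← Set.ncard_image_of_injective _ hinj]
  congr 1
  ext y
  constructor
  · rintro ⟨hy, hne, rfl⟩
    obtain ⟨b, rfl⟩ := exists_orbPoint_eq hy
    refine ⟨(a : B ⧸ orbStab ω)⁻¹ * b, ⟨fun h ↦ hne ?_, ?_⟩, ?_⟩
    · rw [inv_mul_eq_one.1 h]
    · rw [hp.graph_orbPoint, hκ, QuotientGroup.mk_mul, QuotientGroup.mk_inv]
    · exact congrArg (orbPoint ω) (mul_inv_cancel_left _ _)
  · rintro ⟨q, ⟨hq, rfl⟩, rfl⟩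
    induction q using QuotientGroup.induction_on with
    | _ d =>
      refine ⟨orb_orbPoint _ _, (orbPoint_injective ω).ne (by rwa [Ne, mul_eq_left]), ?_⟩
      change hp.graph s(orbPoint ω a, orbPoint ω (a * d : B)) = κ d
      rw [hp.graph_orbPoint, inv_mul_cancel_left, hκ]

theorem color_inv_mul_of_translations (hp : IsColorMatrix p) {σ : Equiv.Perm X}
    (hσ : IsColorAut hp.graph σ) {t : OrbitSpace B X → B} (ht : ∀ x, σ x = t (orb B x) • x)
    {ω ω' : OrbitSpace B X} (hne : ω ≠ ω') : p ω ω' ((t ω)⁻¹ * t ω') = p ω ω' 1 := by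
  have hbase (ω : OrbitSpace B X) : σ (orbPoint ω (1 : B)) = orbPoint ω (t ω : B) := by
    rw [ht, orb_orbPoint, smul_orbPoint, mul_one]
  have hpoints : orbPoint ω (1 : B) ≠ orbPoint ω' (1 : B) := fun h ↦ hne <| by
    rw [← orb_orbPoint ω (1 : B), h, orb_orbPoint]
  rw [← hp.graph_orbPoint, ← hbase, ← hbase, hσ _ _ hpoints, hp.graph_orbPoint, inv_one, one_mul]

end IsColorMatrix

end ColorMatrices

/-- The data from which a coloured graph on `X` is built. The orbits are arranged in a path by
`index`; `link ω ω'`, if nonempty, is a generating coset recording a non-involutive relation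
between the two orbits, and `pattern ω` is the colouring inside `ω`, which has to be rigid once the
link to `partner ω` is taken into account. The orbit of index `0` is the only one in which a point
has fewer than `threshold` neighbours of colour `3`. -/
structure OrbitScheme (B X : Type*) [CommGroup B] [MulAction B X] where
  index : OrbitSpace B X → ℕ
  index_injective : Function.Injective index
  isLowerSet_range_index : IsLowerSet (Set.range index)
  link : OrbitSpace B X → OrbitSpace B X → Set B
  mem_link_inv : ∀ ω ω' d, d⁻¹ ∈ link ω' ω ↔ d ∈ link ω ω'
  link_spec : ∀ ω ω', link ω ω' = ∅ ∨ IsGeneratingCoset (orbStab ω ⊔ orbStab ω') (link ω ω')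
  index_eq_one : ∀ ω ω', (link ω ω').Nonempty → index ω = 0 → index ω' = 1
  pattern : ∀ ω : OrbitSpace B X, B ⧸ orbStab ω → Fin 4
  partner : OrbitSpace B X → OrbitSpace B X
  isRigidPattern : ∀ ω, IsRigidPattern (pattern ω) ((↑) '' link ω (partner ω))
  threshold : ℕ
  colorCount_lt : ∀ ω, index ω = 0 → colorCount (pattern ω) 3 < threshold
  le_colorCount : ∀ ω, index ω ≠ 0 →
    threshold ≤ colorCount (pattern ω) 3 ∨ threshold ≤ 1 ∧ 2 ≤ index ω

namespace OrbitScheme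

variable {B X : Type*} [CommGroup B] [MulAction B X] {C : OrbitScheme B X}
  {ω ω' : OrbitSpace B X} {d : B}

theorem isGeneratingCoset_link (h : (C.link ω ω').Nonempty) :
    IsGeneratingCoset (orbStab ω ⊔ orbStab ω') (C.link ω ω') :=
  (C.link_spec ω ω').resolve_left h.ne_empty

theorem ne_of_link_nonempty (h : (C.link ω ω').Nonempty) : ω ≠ ω' := by
  rintro rfl
  obtain ⟨d, hd⟩ := h
  exact (isGeneratingCoset_link ⟨d, hd⟩).inv_notMem hd ((C.mem_link_inv _ _ _).2 hd)

theorem link_nonempty_comm : (C.link ω' ω).Nonempty ↔ (C.link ω ω').Nonempty :=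
  ⟨fun ⟨d, hd⟩ ↦ ⟨d⁻¹, (C.mem_link_inv _ _ _).2 hd⟩,
    fun ⟨d, hd⟩ ↦ ⟨d⁻¹, (C.mem_link_inv _ _ _).2 hd⟩⟩

theorem sup_ne_top (h : (C.link ω ω').Nonempty) : orbStab ω ⊔ orbStab ω' ≠ ⊤ := fun htop ↦ by
  obtain ⟨d, hd, -⟩ := (isGeneratingCoset_link h).exists_notMem
  exact hd (htop ▸ Subgroup.mem_top d)

variable (C)

/-- The orbits `ω` and `ω'` are consecutive on the path of the orbits of positive index. -/
def Consecutive (ω ω' : OrbitSpace B X) : Prop :=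
  0 < C.index ω ∧ 0 < C.index ω' ∧
    (C.index ω = C.index ω' + 1 ∨ C.index ω' = C.index ω + 1)

open scoped Classical in
/-- The colour of the unspecified pairs between two orbits; it marks the path of orbits. The
first edge of the path has colour `2`, since the orbit of index `0` is to be poor in colour `3`. -/
noncomputable def background (ω ω' : OrbitSpace B X) : Fin 4 :=
  if C.Consecutive ω ω' then 3
  else if ¬(C.link ω ω').Nonempty ∧ C.index ω + C.index ω' = 1 then 2 else 0

open scoped Classical in
/-- The colour between points of `ω` and `ω'` whose coordinates differ by `d`. -/
noncomputable def color (ω ω' : OrbitSpace B X) (d : B) : Fin 4 :=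
  if ω = ω' then C.pattern ω d
  else if d ∈ orbStab ω ⊔ orbStab ω' ∧ orbStab ω ⊔ orbStab ω' ≠ ⊤ then 1
  else if d ∈ C.link ω ω' then 2
  else C.background ω ω'

theorem color_self (ω : OrbitSpace B X) (d : B) : C.color ω ω d = C.pattern ω d :=
  if_pos rfl

open scoped Classical in
theorem background_comm (ω ω' : OrbitSpace B X) : C.background ω' ω = C.background ω ω' := by
  have hcons : C.Consecutive ω' ω ↔ C.Consecutive ω ω' := by
    unfold Consecutive
    tauto
  simp only [background, hcons, link_nonempty_comm (ω := ω), add_comm (C.index ω')]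

theorem background_ne_one (ω ω' : OrbitSpace B X) : C.background ω ω' ≠ 1 := by
  unfold background
  split_ifs <;> decide

open scoped Classical in
theorem isColorMatrix_color : IsColorMatrix C.color where
  color_inv ω ω' d := by
    obtain rfl | h := eq_or_ne ω ω'
    · rw [color_self, color_self, QuotientGroup.mk_inv, (C.isRigidPattern ω).color_inv]
    · simp only [color, if_neg h, if_neg h.symm, sup_comm (orbStab ω'), inv_mem_iff,
        C.mem_link_inv, C.background_comm ω]
  color_mul ω ω' d s hs := by
    obtain rfl | h := eq_or_ne ω ω'
    · rw [color_self, color_self, QuotientGroup.mk_mul_of_mem _ hs]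
    · have hsup : s ∈ orbStab ω ⊔ orbStab ω' := Subgroup.mem_sup_right hs
      have hlink : d * s ∈ C.link ω ω' ↔ d ∈ C.link ω ω' := by
        obtain hempty | hcoset := C.link_spec ω ω'
        · simp only [hempty, Set.mem_empty_iff_false]
        · exact hcoset.mul_mem_iff hsup
      simp only [color, if_neg h, Subgroup.mul_mem_cancel_right _ hsup, hlink]

/-- The coloured graph on `X` described by the scheme. -/
noncomputable def graph : Sym2 X → Fin 4 :=
  C.isColorMatrix_color.graph

variable {C}

theorem color_eq_one_iff (hne : ω ≠ ω') (htop : orbStab ω ⊔ orbStab ω' ≠ ⊤) :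
    C.color ω ω' d = 1 ↔ d ∈ orbStab ω ⊔ orbStab ω' := by
  have := C.background_ne_one ω ω'
  unfold color
  split_ifs <;> simp_all

theorem mem_sup_of_color_eq_color_one (hne : ω ≠ ω') (h : C.color ω ω' d = C.color ω ω' 1) :
    d ∈ orbStab ω ⊔ orbStab ω' := by
  by_cases htop : orbStab ω ⊔ orbStab ω' = ⊤
  · exact htop ▸ Subgroup.mem_top d
  · rw [← color_eq_one_iff hne htop, h, color_eq_one_iff hne htop]
    exact one_mem _

theorem color_eq_two_iff (h : (C.link ω ω').Nonempty) : C.color ω ω' d = 2 ↔ d ∈ C.link ω ω' := by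
  have hback : C.background ω ω' ≠ 2 := by
    unfold background
    split_ifs <;> simp_all
  have hnot : d ∈ orbStab ω ⊔ orbStab ω' → d ∉ C.link ω ω' :=
    (isGeneratingCoset_link h).notMem
  have := ne_of_link_nonempty h
  unfold color
  split_ifs <;> simp_all

theorem consecutive_of_color_eq_three (hne : ω ≠ ω') (h : C.color ω ω' d = 3) :
    C.Consecutive ω ω' := by
  by_contra hcons
  have hback : C.background ω ω' ≠ 3 := by
    unfold background
    split_ifs <;> simp_all
  unfold color at h
  split_ifs at h <;> simp_all

theorem index_eq_one_of_color_eq_two (hne : ω ≠ ω') (h0 : C.index ω' = 0)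
    (h : C.color ω ω' d = 2) : C.index ω = 1 := by
  by_contra h1
  have hlink : ¬(C.link ω ω').Nonempty := fun hl ↦
    h1 (C.index_eq_one _ _ (link_nonempty_comm.2 hl) h0)
  have hback : C.background ω ω' ≠ 2 := by
    unfold background
    split_ifs with hcons hfirst
    · decide
    · exact absurd hfirst.2 (by omega)
    · decide
  rw [color, if_neg hne] at h
  split_ifs at h with _ hd
  · exact absurd h (by decide)
  · exact hlink ⟨d, hd⟩
  · exact hback h

theorem exists_color_eq_background (hne : ω ≠ ω') : ∃ d, C.color ω ω' d = C.background ω ω' := by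
  by_cases hlink : (C.link ω ω').Nonempty
  · obtain ⟨d, hd, hd'⟩ := (isGeneratingCoset_link hlink).exists_notMem
    exact ⟨d, by simp [color, hne, hd, hd']⟩
  · have hempty (d : B) : d ∉ C.link ω ω' := fun hd ↦ hlink ⟨d, hd⟩
    by_cases htop : orbStab ω ⊔ orbStab ω' = ⊤
    · exact ⟨1, by simp [color, hne, htop, hempty]⟩
    · obtain ⟨d, -, hd⟩ := SetLike.exists_of_lt (lt_top_iff_ne_top.2 htop)
      exact ⟨d, by simp [color, hne, hd, hempty]⟩

theorem Consecutive.ne (h : C.Consecutive ω ω') : ω ≠ ω' := by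
  rintro rfl
  obtain ⟨-, -, h⟩ := h
  omega

theorem Consecutive.exists_color_eq_three (h : C.Consecutive ω ω') : ∃ d, C.color ω ω' d = 3 := by
  obtain ⟨d, hd⟩ := exists_color_eq_background h.ne
  exact ⟨d, hd.trans (if_pos h)⟩

theorem exists_color_eq_two (h1 : C.index ω = 1) (h0 : C.index ω' = 0) :
    ∃ d, C.color ω ω' d = 2 := by
  by_cases hlink : (C.link ω ω').Nonempty
  · exact hlink.imp fun d hd ↦ (color_eq_two_iff hlink).2 hd
  · have hne : ω ≠ ω' := fun h ↦ by rw [h, h0] at h1; omega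
    have hcons : ¬C.Consecutive ω ω' := fun h ↦ by have := h.2.1; omega
    obtain ⟨d, hd⟩ := exists_color_eq_background hne
    exact ⟨d, by rw [hd, background, if_neg hcons, if_pos ⟨hlink, by omega⟩]⟩

theorem Consecutive.exists_graph_eq_three {x : X} (h : C.Consecutive (orb B x) ω) :
    ∃ y, orb B y = ω ∧ C.graph s(x, y) = 3 := by
  obtain ⟨d, hd⟩ := h.exists_color_eq_three
  rw [← hd]
  exact C.isColorMatrix_color.exists_color_eq x ω d

theorem exists_graph_eq_two {x : X} (h1 : C.index (orb B x) = 1) (h0 : C.index ω = 0) :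
    ∃ y, orb B y = ω ∧ C.graph s(x, y) = 2 := by
  obtain ⟨d, hd⟩ := exists_color_eq_two h1 h0
  rw [← hd]
  exact C.isColorMatrix_color.exists_color_eq x ω d

theorem exists_index_eq {k : ℕ} (h : k ≤ C.index ω) : ∃ ω', C.index ω' = k :=
  C.isLowerSet_range_index h ⟨ω, rfl⟩

theorem colorDegree_of_index_eq_zero {x : X} (h0 : C.index (orb B x) = 0) :
    colorDegree C.graph 3 x = colorCount (C.pattern (orb B x)) 3 := by
  rw [← C.isColorMatrix_color.ncard_color_eq (C.color_self _) 3 rfl, colorDegree]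
  congr 1
  ext y
  refine ⟨fun ⟨hne, h⟩ ↦ ⟨?_, hne, h⟩, fun h ↦ h.2⟩
  by_contra horb
  have := (consecutive_of_color_eq_three (Ne.symm horb) h).1
  omega

theorem colorCount_le_colorDegree [Finite X] (x : X) :
    colorCount (C.pattern (orb B x)) 3 ≤ colorDegree C.graph 3 x := by
  rw [← C.isColorMatrix_color.ncard_color_eq (C.color_self _) 3 rfl]
  exact Set.ncard_le_ncard fun y h ↦ h.2

theorem one_le_colorDegree [Finite X] {x : X} (h : 2 ≤ C.index (orb B x)) :
    1 ≤ colorDegree C.graph 3 x := by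
  obtain ⟨ω, hω⟩ := exists_index_eq (Nat.sub_le (C.index (orb B x)) 1)
  have hcons : C.Consecutive (orb B x) ω := ⟨by omega, by omega, .inl (by omega)⟩
  obtain ⟨y, hy, hxy⟩ := hcons.exists_graph_eq_three
  refine (Set.ncard_pos (Set.toFinite _)).2 ⟨y, ?_, hxy⟩
  rintro rfl
  exact hcons.ne hy

theorem colorDegree_lt_threshold_iff [Finite X] (x : X) :
    colorDegree C.graph 3 x < C.threshold ↔ C.index (orb B x) = 0 := by
  refine ⟨fun h ↦ ?_, fun h ↦ (colorDegree_of_index_eq_zero h).trans_lt (C.colorCount_lt _ h)⟩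
  by_contra h0
  obtain hcount | ⟨hthreshold, hindex⟩ := C.le_colorCount _ h0
  · exact (h.trans_le hcount).not_ge (colorCount_le_colorDegree x)
  · exact (h.trans_le hthreshold).not_ge (one_le_colorDegree hindex)

theorem index_apply [Finite X] {σ : Equiv.Perm X} (hσ : IsColorAut C.graph σ) {x : X} {k : ℕ}
    (hx : C.index (orb B x) = k) : C.index (orb B (σ x)) = k := by
  induction k using Nat.strong_induction_on generalizing σ x with
  | _ k ih =>
    obtain rfl | hk := Nat.eq_zero_or_pos k
    · rw [← colorDegree_lt_threshold_iff, hσ.colorDegree_apply, colorDegree_lt_threshold_iff, hx]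
    have hge : k ≤ C.index (orb B (σ x)) := by
      by_contra! hlt
      have := ih _ hlt hσ.symm rfl
      rw [Equiv.symm_apply_apply] at this
      omega
    obtain ⟨ω, hω⟩ := exists_index_eq ((Nat.sub_le k 1).trans_eq hx.symm)
    have hmove {y : X} (hy : orb B y = ω) :
        C.graph s(σ x, σ y) = C.graph s(x, y) ∧ orb B (σ x) ≠ orb B (σ y) ∧
          C.index (orb B (σ y)) = k - 1 := by
      have hσy := ih (k - 1) (by omega) hσ (hy ▸ hω)
      exact ⟨hσ _ _ (by rintro rfl; rw [hy] at hx; omega), fun h ↦ by rw [h] at hge; omega, hσy⟩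
    obtain rfl | hk := eq_or_lt_of_le (show 1 ≤ k from hk)
    · obtain ⟨y, hy, hxy⟩ := exists_graph_eq_two hx hω
      obtain ⟨hcolor, hne, hσy⟩ := hmove hy
      exact index_eq_one_of_color_eq_two hne hσy (hcolor.trans hxy)
    · have hcons : C.Consecutive (orb B x) ω := ⟨by omega, by omega, .inl (by omega)⟩
      obtain ⟨y, hy, hxy⟩ := hcons.exists_graph_eq_three
      obtain ⟨hcolor, hne, hσy⟩ := hmove hy
      obtain ⟨-, -, h⟩ := consecutive_of_color_eq_three hne (hcolor.trans hxy)
      omega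

theorem orb_apply [Finite X] {σ : Equiv.Perm X} (hσ : IsColorAut C.graph σ) (x : X) :
    orb B (σ x) = orb B x :=
  C.index_injective (index_apply hσ rfl)

theorem mem_image_link_iff (h : (C.link ω ω').Nonempty) (a b : B) :
    (a : B ⧸ orbStab ω)⁻¹ * b ∈ ((↑) : B → B ⧸ orbStab ω) '' C.link ω ω' ↔
      ∃ y, orb B y = ω' ∧ C.graph s(orbPoint ω b, y) = 1 ∧ C.graph s(orbPoint ω a, y) = 2 := by
  have hne := ne_of_link_nonempty h
  have htop := sup_ne_top h
  have hcoset := isGeneratingCoset_link h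
  simp only [graph]
  constructor
  · rintro ⟨d, hd, hdab⟩
    refine ⟨orbPoint ω' b, orb_orbPoint _ _, ?_, ?_⟩
    · rw [IsColorMatrix.graph_orbPoint, color_eq_one_iff hne htop, inv_mul_cancel]
      exact one_mem _
    · rw [IsColorMatrix.graph_orbPoint, color_eq_two_iff h]
      have hmem : d⁻¹ * (a⁻¹ * b) ∈ orbStab ω ⊔ orbStab ω' :=
        Subgroup.mem_sup_left (QuotientGroup.eq.1 hdab)
      rwa [← hcoset.mul_mem_iff hmem, mul_inv_cancel_left] at hd
  · rintro ⟨y, hy, h1, h2⟩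
    obtain ⟨c, rfl⟩ := exists_orbPoint_eq hy
    rw [IsColorMatrix.graph_orbPoint, color_eq_one_iff hne htop] at h1
    rw [IsColorMatrix.graph_orbPoint, color_eq_two_iff h] at h2
    refine ⟨a⁻¹ * b, (hcoset.mul_mem_iff h1).1 ?_, rfl⟩
    rwa [mul_assoc, mul_inv_cancel_left]

theorem mem_image_link_iff_of_isColorAut [Finite X] {σ : Equiv.Perm X}
    (hσ : IsColorAut C.graph σ) {q r q' r' : B ⧸ orbStab ω}
    (hq : σ (orbPoint ω q) = orbPoint ω q') (hr : σ (orbPoint ω r) = orbPoint ω r') :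
    q'⁻¹ * r' ∈ ((↑) : B → B ⧸ orbStab ω) '' C.link ω ω' ↔
      q⁻¹ * r ∈ ((↑) : B → B ⧸ orbStab ω) '' C.link ω ω' := by
  by_cases hlink : (C.link ω ω').Nonempty
  · induction q using QuotientGroup.induction_on
    induction r using QuotientGroup.induction_on
    induction q' using QuotientGroup.induction_on
    induction r' using QuotientGroup.induction_on
    have hne (q : B ⧸ orbStab ω) {y : X} (hy : orb B y = ω') : orbPoint ω q ≠ y := by
      rintro rfl
      exact ne_of_link_nonempty hlink ((orb_orbPoint ω q).symm.trans hy)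
    rw [mem_image_link_iff hlink, mem_image_link_iff hlink, ← hq, ← hr, ← σ.exists_congr_right]
    refine exists_congr fun y ↦ ?_
    rw [orb_apply hσ]
    exact and_congr_right fun hy ↦ by rw [hσ _ _ (hne _ hy), hσ _ _ (hne _ hy)]
  · rw [Set.not_nonempty_iff_eq_empty.1 hlink, Set.image_empty]
    exact Iff.rfl

theorem exists_smul_eq [Finite X] {σ : Equiv.Perm X} (hσ : IsColorAut C.graph σ)
    (ω : OrbitSpace B X) : ∃ t : B, ∀ x, orb B x = ω → σ x = t • x :=
  C.isColorMatrix_color.exists_smul_eq_of_isRigidPattern (C.color_self ω) (C.isRigidPattern ω) hσ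
    (orb_apply hσ) fun _ _ _ _ ↦ mem_image_link_iff_of_isColorAut hσ

theorem twoOrbitCompatible_of_isColorAut [Finite X] {σ : Equiv.Perm X}
    (hσ : IsColorAut C.graph σ) :
    TwoOrbitCompatible ((MulAction.toPermHom B X).range : Set (Equiv.Perm X)) σ := by
  choose t ht using exists_smul_eq hσ
  have hσt (x : X) : σ x = t (orb B x) • x := ht _ x rfl
  exact twoOrbitCompatible_of_translations t hσt fun ω ω' hne ↦
    mem_sup_of_color_eq_color_one hne
      (C.isColorMatrix_color.color_inv_mul_of_translations hσ hσt hne)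

theorem isColGraphAutGroup_graph [Finite X] (C : OrbitScheme B X)
    (hclosed : TwoOrbitClosed (MulAction.toPermHom B X).range) :
    IsColGraphAutGroup C.graph (MulAction.toPermHom B X).range := by
  refine fun σ ↦ ⟨?_, fun hσ ↦ hclosed σ (twoOrbitCompatible_of_isColorAut hσ)⟩
  rintro ⟨b, rfl⟩
  exact C.isColorMatrix_color.isColorAut_smul b

end OrbitScheme

theorem isLowerSet_range_val_comp {V : Type*} {n : ℕ} (e : V ≃ Fin n) :
    IsLowerSet (Set.range fun v ↦ (e v : ℕ)) := by
  rintro _ k hk ⟨v, rfl⟩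
  exact ⟨e.symm ⟨k, hk.trans_lt (e v).isLt⟩, congrArg Fin.val (e.apply_symm_apply _)⟩

theorem exists_indexing {V : Type*} [Finite V] {u v : V} (huv : u ≠ v) :
    ∃ index : V → ℕ, Function.Injective index ∧ IsLowerSet (Set.range index) ∧
      index u = 0 ∧ index v = 1 := by
  obtain ⟨n, ⟨e⟩⟩ := Finite.exists_equiv_fin V
  match n, e with
  | 0, e => exact (e u).elim0
  | 1, e => exact absurd (e.injective (Subsingleton.elim _ _)) huv
  | n + 2, e =>
    obtain ⟨f, hu, hv⟩ := MulAction.is_two_pretransitive_iff.1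
      (Equiv.Perm.isMultiplyPretransitive (Fin (n + 2)) 2) (e.injective.ne huv) zero_ne_one
    exact ⟨fun w ↦ e.trans f w, Fin.val_injective.comp (e.trans f).injective,
      isLowerSet_range_val_comp (e.trans f), congrArg Fin.val hu, congrArg Fin.val hv⟩

theorem exists_le_support_subset_and_leaf {V : Type*} {Γ : SimpleGraph V} (hΓ : ∃ u v, Γ.Adj u v) :
    ∃ Φ ≤ Γ, Γ.support ⊆ Φ.support ∧ ∃ u v, Φ.Adj u v ∧ ∀ w, Φ.Adj u w → w = v := by
  by_cases hleaf : ∃ u v, Γ.Adj u v ∧ ∀ w, Γ.Adj u w → w = v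
  · exact ⟨Γ, le_rfl, subset_rfl, hleaf⟩
  obtain ⟨u, v, huv⟩ := hΓ
  let Φ : SimpleGraph V :=
    { Adj x y := Γ.Adj x y ∧ (x = u → y = v) ∧ (y = u → x = v)
      symm := ⟨fun _ _ h ↦ ⟨h.1.symm, h.2.2, h.2.1⟩⟩
      loopless := ⟨fun x h ↦ Γ.loopless.irrefl x h.1⟩ }
  have hΦuv : Φ.Adj u v := ⟨huv, fun _ ↦ rfl, fun h ↦ absurd h huv.ne'⟩
  refine ⟨Φ, fun _ _ h ↦ h.1, fun w ⟨x, hwx⟩ ↦ ?_, u, v, hΦuv, fun w h ↦ h.2.1 rfl⟩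
  obtain rfl | hwu := eq_or_ne w u
  · exact ⟨v, hΦuv⟩
  obtain rfl | hxu := eq_or_ne x u
  · obtain ⟨y, hwy, hyx⟩ : ∃ y, Γ.Adj w y ∧ y ≠ x := by
      by_contra! h
      exact hleaf ⟨w, x, hwx, h⟩
    exact ⟨y, hwy, fun h ↦ absurd h hwu, fun h ↦ absurd h hyx⟩
  · exact ⟨x, hwx, fun h ↦ absurd h hwu, fun h ↦ absurd h hxu⟩

section LinkGraph

variable {B X : Type*} [CommGroup B] [MulAction B X] {ω : OrbitSpace B X}

/-- Two orbits are adjacent if `B` modulo the join of their stabilizers is not an elementary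
abelian `2`-group, that is, if there is a generating coset available to link them. -/
def linkGraph (B X : Type*) [CommGroup B] [MulAction B X] : SimpleGraph (OrbitSpace B X) where
  Adj ω ω' := ω ≠ ω' ∧ ∃ a : B, a * a ∉ orbStab ω ⊔ orbStab ω'
  symm := ⟨fun ω ω' ⟨hne, h⟩ ↦ ⟨hne.symm, by rwa [sup_comm]⟩⟩
  loopless := ⟨fun _ h ↦ h.1 rfl⟩

/-- The group induced by `B` on the orbit is an elementary abelian `2`-group. -/
def IsElementary (ω : OrbitSpace B X) : Prop :=
  ∀ a : B, a * a ∈ orbStab ω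

/-- The orbit can be coloured rigidly, without the help of links, by the colours `0`, `1`, `2`. -/
def HasThreeColorPattern (ω : OrbitSpace B X) : Prop :=
  ∃ κ : B ⧸ orbStab ω → Fin 4, IsRigidPattern κ ∅ ∧ colorCount κ 3 = 0

theorem IsElementary.inv_eq_self (h : IsElementary ω) (q : B ⧸ orbStab ω) : q⁻¹ = q := by
  induction q using QuotientGroup.induction_on with
  | _ a =>
    rw [inv_eq_iff_mul_eq_one, ← QuotientGroup.mk_mul, QuotientGroup.eq_one_iff]
    exact h a

theorem orbStab_ne_top_of_not_isElementary (h : ¬IsElementary ω) : orbStab ω ≠ ⊤ := fun htop ↦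
  h fun _ ↦ htop ▸ Subgroup.mem_top _

theorem not_isElementary_of_adj {ω' : OrbitSpace B X} (h : (linkGraph B X).Adj ω ω') :
    ¬IsElementary ω := fun hω ↦ by
  obtain ⟨-, a, ha⟩ := h
  exact ha (Subgroup.mem_sup_left (hω a))

theorem hasThreeColorPattern_of_orbStab_eq_top (h : orbStab ω = ⊤) : HasThreeColorPattern ω := by
  have : Subsingleton (B ⧸ orbStab ω) := QuotientGroup.subsingleton_iff.2 h
  refine ⟨fun _ ↦ 0, ⟨fun _ ↦ rfl, fun _ _ _ ↦ Subsingleton.elim _ _⟩, ?_⟩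
  rw [colorCount, Set.ncard_eq_zero (Set.toFinite _)]
  exact Set.eq_empty_of_forall_notMem fun q hq ↦ hq.1 (Subsingleton.elim _ _)

open scoped Classical Pointwise in
theorem exists_link_of_le_linkGraph [Finite B] {index : OrbitSpace B X → ℕ}
    (hindex : Function.Injective index) {Φ : SimpleGraph (OrbitSpace B X)}
    (hΦ : Φ ≤ linkGraph B X) :
    ∃ link : OrbitSpace B X → OrbitSpace B X → Set B,
      (∀ ω ω' d, d⁻¹ ∈ link ω' ω ↔ d ∈ link ω ω') ∧
      (∀ ω ω', ¬Φ.Adj ω ω' → link ω ω' = ∅) ∧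
      ∀ ω ω', Φ.Adj ω ω' → IsGeneratingCoset (orbStab ω ⊔ orbStab ω') (link ω ω') := by
  have hcoset (ω ω' : OrbitSpace B X) :
      ∃ W, Φ.Adj ω ω' → IsGeneratingCoset (orbStab ω ⊔ orbStab ω') W := by
    by_cases h : Φ.Adj ω ω'
    · obtain ⟨-, a, ha⟩ := hΦ h
      exact (exists_isGeneratingCoset ha).imp fun _ hW _ ↦ hW
    · exact ⟨∅, fun h' ↦ absurd h' h⟩
  choose W hW using hcoset
  refine ⟨fun ω ω' ↦ if Φ.Adj ω ω' then if index ω < index ω' then W ω ω' else (W ω' ω)⁻¹ else ∅,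
    fun ω ω' d ↦ ?_, fun ω ω' h ↦ if_neg h, fun ω ω' h ↦ ?_⟩
  · by_cases h : Φ.Adj ω ω'
    · obtain hlt | hlt := (hindex.ne h.ne).lt_or_gt <;> simp [h, h.symm, hlt, hlt.not_gt]
    · simp [h, Φ.adj_comm ω']
  · obtain hlt | hlt := (hindex.ne h.ne).lt_or_gt
    · simpa [h, hlt] using hW _ _ h
    · simpa [h, hlt.not_gt, sup_comm] using (hW _ _ h.symm).inv

theorem exists_isRigidPattern_of_isElementary [Finite B] (h : IsElementary ω) :
    ∃ κ : B ⧸ orbStab ω → Fin 4, IsRigidPattern κ ∅ := by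
  obtain ⟨κ, hκ, -⟩ | ⟨⟨κ, hκ, -⟩, -⟩ := exists_isRigidPattern_of_inv_eq_self h.inv_eq_self
  exacts [⟨κ, hκ⟩, ⟨κ, hκ⟩]

theorem exists_partner_and_pattern [Finite B] {W : OrbitSpace B X → Set B}
    (hW : ¬IsElementary ω → ∃ ω', IsGeneratingCoset (orbStab ω ⊔ orbStab ω') (W ω')) :
    ∃ (ω' : OrbitSpace B X) (κ : B ⧸ orbStab ω → Fin 4), IsRigidPattern κ ((↑) '' W ω') ∧
      (¬IsElementary ω ∨ HasThreeColorPattern ω → colorCount κ 3 = 0) := by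
  by_cases hω : IsElementary ω
  · by_cases hthree : HasThreeColorPattern ω
    · obtain ⟨κ, hκ, hcount⟩ := hthree
      exact ⟨ω, κ, hκ.of_empty _, fun _ ↦ hcount⟩
    · obtain ⟨κ, hκ⟩ := exists_isRigidPattern_of_isElementary hω
      exact ⟨ω, κ, hκ.of_empty _, fun h ↦ absurd h (not_or.2 ⟨not_not.2 hω, hthree⟩)⟩
  · obtain ⟨ω', hcoset⟩ := hW hω
    obtain ⟨κ, hκ, hcount⟩ := hcoset.exists_isRigidPattern le_sup_left
    exact ⟨ω', κ, hκ, fun _ ↦ hcount⟩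

/-- Only the starting orbit of the path needs care: it must avoid the colour `3`, and the second
orbit, being nontrivial, can be recoloured so as to use it. -/
theorem nonempty_orbitScheme_of_subgraph [Finite B] {index : OrbitSpace B X → ℕ}
    (hinj : Function.Injective index) (hlower : IsLowerSet (Set.range index))
    {Φ : SimpleGraph (OrbitSpace B X)} (hΦ : Φ ≤ linkGraph B X)
    (hleaf : ∀ ω ω', Φ.Adj ω ω' → index ω = 0 → index ω' = 1)
    (hsupport : ∀ ω, ¬IsElementary ω → ω ∈ Φ.support)
    (hzero : ∀ ω, index ω = 0 → IsElementary ω → HasThreeColorPattern ω)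
    (hone : ∀ ω, index ω = 1 → orbStab ω ≠ ⊤) : Nonempty (OrbitScheme B X) := by
  obtain ⟨link, hinv, hempty, hcoset⟩ := exists_link_of_le_linkGraph hinj hΦ
  have hpattern (ω : OrbitSpace B X) : ∃ (ω' : OrbitSpace B X) (κ : B ⧸ orbStab ω → Fin 4),
      IsRigidPattern κ ((↑) '' link ω ω') ∧ (index ω = 0 → colorCount κ 3 = 0) ∧
        (index ω = 1 → 0 < colorCount κ 3) := by
    obtain ⟨ω', κ, hκ, hcount⟩ :=
      exists_partner_and_pattern fun hω ↦ (hsupport ω hω).imp fun ω' ↦ hcoset ω ω'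
    by_cases h1 : index ω = 1
    · have : Nontrivial (B ⧸ orbStab ω) := QuotientGroup.nontrivial_iff.2 (hone ω h1)
      obtain ⟨κ', hκ', hpos⟩ := hκ.exists_colorCount_pos 3
      exact ⟨ω', κ', hκ', fun h ↦ by omega, fun _ ↦ hpos⟩
    · exact ⟨ω', κ, hκ, fun h ↦ hcount ((em _).symm.imp_right (hzero ω h)),
        fun h ↦ absurd h h1⟩
  choose partner pattern hrigid hcount_zero hcount_one using hpattern
  exact ⟨{
    index := index
    index_injective := hinj
    isLowerSet_range_index := hlower
    link := link
    mem_link_inv := hinv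
    link_spec := fun ω ω' ↦ (em (Φ.Adj ω ω')).symm.imp (hempty ω ω') (hcoset ω ω')
    index_eq_one := fun ω ω' hlink ↦
      hleaf ω ω' (of_not_not fun hadj ↦ hlink.ne_empty (hempty _ _ hadj))
    pattern := pattern
    partner := partner
    isRigidPattern := hrigid
    threshold := 1
    colorCount_lt := fun ω h ↦ Nat.lt_one_iff.2 (hcount_zero ω h)
    le_colorCount := fun ω h ↦
      (eq_or_ne (index ω) 1).imp (hcount_one ω) fun h1 ↦ ⟨le_rfl, by omega⟩ }⟩

theorem nonempty_orbitScheme_of_adj [Finite B] [Finite X]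
    (hsupport : ∀ ω, ¬IsElementary ω → ω ∈ (linkGraph B X).support)
    (hadj : ∃ ω ω', (linkGraph B X).Adj ω ω') : Nonempty (OrbitScheme B X) := by
  obtain ⟨Φ, hΦ, hle, u, v, huv, hleaf⟩ := exists_le_support_subset_and_leaf hadj
  obtain ⟨index, hinj, hlower, hu, hv⟩ := exists_indexing huv.ne
  have hzero {ω : OrbitSpace B X} (h : index ω = 0) : ω = u := hinj (h.trans hu.symm)
  refine nonempty_orbitScheme_of_subgraph hinj hlower hΦ (fun ω ω' h h0 ↦ ?_)
    (fun ω hω ↦ hle (hsupport ω hω)) (fun ω h0 hω ↦ ?_) (fun ω h1 ↦ ?_)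
  · obtain rfl := hzero h0
    rwa [hleaf _ h]
  · obtain rfl := hzero h0
    exact absurd hω (not_isElementary_of_adj (hΦ huv))
  · obtain rfl := hinj (h1.trans hv.symm)
    exact orbStab_ne_top_of_not_isElementary (not_isElementary_of_adj (hΦ huv).symm)

theorem nonempty_orbitScheme_of_hasThreeColorPattern [Finite B]
    (hel : ∀ ω : OrbitSpace B X, IsElementary ω) {index : OrbitSpace B X → ℕ}
    (hinj : Function.Injective index) (hlower : IsLowerSet (Set.range index))
    (hzero : ∀ ω, index ω = 0 → HasThreeColorPattern ω)
    (hone : ∀ ω, index ω = 1 → orbStab ω ≠ ⊤) : Nonempty (OrbitScheme B X) :=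
  nonempty_orbitScheme_of_subgraph hinj hlower bot_le (fun _ _ h ↦ h.elim)
    (fun ω h ↦ absurd (hel ω) h) (fun ω h _ ↦ hzero ω h) hone

theorem nonempty_orbitScheme_of_not_hasThreeColorPattern [Finite B] [Finite X]
    (hel : ∀ ω : OrbitSpace B X, IsElementary ω)
    (hno : ∀ ω : OrbitSpace B X, ¬HasThreeColorPattern ω) : Nonempty (OrbitScheme B X) := by
  obtain ⟨n, ⟨e⟩⟩ := Finite.exists_equiv_fin (OrbitSpace B X)
  have hpattern (ω : OrbitSpace B X) : ∃ κ : B ⧸ orbStab ω → Fin 4, IsRigidPattern κ ∅ ∧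
      ((e ω : ℕ) = 0 → colorCount κ 3 < 2) ∧ ((e ω : ℕ) ≠ 0 → 2 ≤ colorCount κ 3) := by
    obtain ⟨⟨κ, hκ, hlt⟩, κ', hκ', hle⟩ :=
      (exists_isRigidPattern_of_inv_eq_self (hel ω).inv_eq_self).resolve_left (hno ω)
    by_cases h0 : (e ω : ℕ) = 0
    · exact ⟨κ, hκ, fun _ ↦ hlt, fun h ↦ absurd h0 h⟩
    · exact ⟨κ', hκ', fun h ↦ absurd h h0, fun _ ↦ hle⟩
  choose pattern hrigid hlt hle using hpattern
  exact ⟨{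
    index := fun ω ↦ e ω
    index_injective := Fin.val_injective.comp e.injective
    isLowerSet_range_index := isLowerSet_range_val_comp e
    link := fun _ _ ↦ ∅
    mem_link_inv := fun _ _ _ ↦ Iff.rfl
    link_spec := fun _ _ ↦ .inl rfl
    index_eq_one := fun _ _ h ↦ absurd h Set.not_nonempty_empty
    pattern := pattern
    partner := id
    isRigidPattern := fun ω ↦ (hrigid ω).of_empty _
    threshold := 2
    colorCount_lt := hlt
    le_colorCount := fun ω h ↦ .inl (hle ω h) }⟩

theorem nonempty_orbitScheme_of_isElementary [Finite B] [Finite X]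
    (hel : ∀ ω : OrbitSpace B X, IsElementary ω) (hnt : ∃ ω : OrbitSpace B X, orbStab ω ≠ ⊤) :
    Nonempty (OrbitScheme B X) := by
  by_cases hno : ∀ ω : OrbitSpace B X, ¬HasThreeColorPattern ω
  · exact nonempty_orbitScheme_of_not_hasThreeColorPattern hel hno
  by_cases hpair : ∃ u v : OrbitSpace B X, u ≠ v ∧ HasThreeColorPattern u ∧ orbStab v ≠ ⊤
  · obtain ⟨u, v, huv, hu, hv⟩ := hpair
    obtain ⟨index, hinj, hlower, hu0, hv1⟩ := exists_indexing huv
    refine nonempty_orbitScheme_of_hasThreeColorPattern hel hinj hlower (fun ω h ↦ ?_)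
      fun ω h ↦ ?_
    · rwa [hinj (h.trans hu0.symm)]
    · rwa [hinj (h.trans hv1.symm)]
  push Not at hno hpair
  obtain ⟨u, hu⟩ := hno
  obtain ⟨v, hv⟩ := hnt
  obtain rfl : u = v := of_not_not fun huv ↦ hv (hpair u v huv hu)
  have hsingle (ω : OrbitSpace B X) : ω = u := of_not_not fun hω ↦
    hv (hpair ω u hω (hasThreeColorPattern_of_orbStab_eq_top (hpair u ω (Ne.symm hω) hu)))
  refine nonempty_orbitScheme_of_hasThreeColorPattern (index := fun _ ↦ 0) hel
    (fun ω ω' _ ↦ (hsingle ω).trans (hsingle ω').symm) ?_ (fun ω _ ↦ by rwa [hsingle ω])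
    fun _ h ↦ absurd h zero_ne_one
  rintro _ k hk ⟨_, rfl⟩
  exact ⟨u, (Nat.le_zero.1 hk).symm⟩

theorem nonempty_orbitScheme [Finite B] [Finite X]
    (hsupport : ∀ ω, ¬IsElementary ω → ω ∈ (linkGraph B X).support)
    (hnt : ∃ ω : OrbitSpace B X, orbStab ω ≠ ⊤) : Nonempty (OrbitScheme B X) := by
  by_cases hadj : ∃ ω ω', (linkGraph B X).Adj ω ω'
  · exact nonempty_orbitScheme_of_adj hsupport hadj
  · refine nonempty_orbitScheme_of_isElementary (fun ω ↦ of_not_not fun hω ↦ hadj ?_) hnt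
    exact ⟨ω, hsupport ω hω⟩

end LinkGraph

section OrbitwiseTranslations

variable {B X : Type*} [CommGroup B] [MulAction B X]

/-- The permutation of `X` acting on each orbit `ω` as `t ω`. -/
def orbitwiseTranslation (t : OrbitSpace B X → B) : Equiv.Perm X where
  toFun x := t (orb B x) • x
  invFun x := (t (orb B x))⁻¹ • x
  left_inv x := by simp only [orb_smul, inv_smul_smul]
  right_inv x := by simp only [orb_smul, smul_inv_smul]

theorem factorIsElem2_of_notMem_support
    (hclosed : TwoOrbitClosed (MulAction.toPermHom B X).range) {x : X}
    (hx : orb B x ∉ (linkGraph B X).support) :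
    FactorIsElem2 (MulAction.toPermHom B X).range
      (orbitOf ((MulAction.toPermHom B X).range : Set (Equiv.Perm X)) x) := by
  classical
  rintro _ ⟨a, rfl⟩
  have hsq (ω : OrbitSpace B X) (hω : orb B x ≠ ω) : a * a ∈ orbStab (orb B x) ⊔ orbStab ω :=
    of_not_not fun h ↦ hx ⟨ω, hω, a, h⟩
  let t : OrbitSpace B X → B := Function.update 1 (orb B x) (a * a)
  have ht : t (orb B x) = a * a := Function.update_self ..
  have ht_one (ω : OrbitSpace B X) (hω : ω ≠ orb B x) : t ω = 1 := Function.update_of_ne hω ..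
  refine ⟨orbitwiseTranslation t, hclosed _ (twoOrbitCompatible_of_translations t (fun _ ↦ rfl)
    fun ω ω' hne ↦ ?_), fun z hz ↦ ?_, fun z hz ↦ ?_⟩
  · obtain rfl | hω := eq_or_ne ω (orb B x)
    · rw [ht, ht_one ω' hne.symm, mul_one, inv_mem_iff]
      exact hsq ω' hne
    obtain rfl | hω' := eq_or_ne ω' (orb B x)
    · rw [ht, ht_one ω hω, inv_one, one_mul, sup_comm]
      exact hsq ω hω.symm
    · rw [ht_one ω hω, ht_one ω' hω', inv_one, one_mul]
      exact one_mem _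
  · change t (orb B z) • z = a • a • z
    rw [mem_orbitOf_range_iff.1 hz, ht, mul_smul]
  · change t (orb B z) • z = z
    rw [ht_one _ (mt mem_orbitOf_range_iff.2 hz), one_smul]

theorem exists_orbStab_ne_top (hnt : (MulAction.toPermHom B X).range ≠ ⊥) :
    ∃ ω : OrbitSpace B X, orbStab ω ≠ ⊤ := by
  contrapose! hnt
  refine (Subgroup.eq_bot_iff_forall _).2 ?_
  rintro _ ⟨b, rfl⟩
  ext x
  have hb : b⁻¹ * 1 ∈ orbStab (orb B x) := hnt (orb B x) ▸ Subgroup.mem_top _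
  exact (smul_eq_smul_of_inv_mul_mem hb).trans (one_smul B x)

theorem inGR4_range_toPermHom [Finite B] [Finite X]
    (hnt : (MulAction.toPermHom B X).range ≠ ⊥)
    (hclosed : TwoOrbitClosed (MulAction.toPermHom B X).range)
    (hcond : ∀ x, FactorIsElem2 (MulAction.toPermHom B X).range
        (orbitOf ((MulAction.toPermHom B X).range : Set (Equiv.Perm X)) x) →
      ∀ a ∈ (MulAction.toPermHom B X).range,
        ∀ z ∈ orbitOf ((MulAction.toPermHom B X).range : Set (Equiv.Perm X)) x, a (a z) = z) :
    InGR4 (MulAction.toPermHom B X).range := by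
  have hsupport (ω : OrbitSpace B X) (hω : ¬IsElementary ω) : ω ∈ (linkGraph B X).support := by
    contrapose! hω
    have hout : orb B ω.out = ω := Quotient.out_eq' ω
    intro a
    rw [MulAction.mem_stabilizer_iff, mul_smul]
    exact hcond ω.out (factorIsElem2_of_notMem_support hclosed (hout.symm ▸ hω)) _ ⟨a, rfl⟩ _
      (mem_orbitOf_range_iff.2 rfl)
  obtain ⟨C⟩ := nonempty_orbitScheme hsupport (exists_orbStab_ne_top hnt)
  exact ⟨C.graph, C.isColGraphAutGroup_graph hclosed⟩

end OrbitwiseTranslations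

/-- A nontrivial abelian subgroup `A ≤ Sym(X)` that is 2-orbit-closed and such that for
every orbit `O`, if `A_O / A_O^*` is an elementary abelian 2-group then so is `A_O`,
is the automorphism group of a 4-coloured graph on `X`. -/
theorem statement6 (X : Type*) [Fintype X] (A : Subgroup (Equiv.Perm X))
    (hnt : A ≠ ⊥) (hab : ∀ a ∈ A, ∀ b ∈ A, a * b = b * a)
    (hclosed : TwoOrbitClosed A)
    (hcond : ∀ x : X, FactorIsElem2 A (orbitOf (A : Set (Equiv.Perm X)) x) →
      ∀ a ∈ A, ∀ z ∈ orbitOf (A : Set (Equiv.Perm X)) x, a (a z) = z) :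
    InGR4 A := by
  let _ : CommGroup A := { mul_comm := fun a b ↦ Subtype.ext (hab a a.2 b b.2) }
  have hrange : (MulAction.toPermHom A X).range = A := A.range_subtype
  simpa only [hrange] using inGR4_range_toPermHom (B := A) (X := X) (by rwa [hrange])
    (by rwa [hrange]) (by rwa [hrange])
end

section
/- Let G be a finite abelian group (written additively), let α : x ↦ −x be the involution of G, and let A⁺ be the subgroup of Sym(G) generated by all translations t_g (g ∈ G) together with α. Then A⁺ is the automorphism group of a 4-coloured graph on G (A⁺ ∈ GR(4)). -/
/-- The regular permutation group of a finite abelian group `G`: the subgroup of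
`Sym(G)` consisting of all translations `t_g : x ↦ x + g`. -/
def translations (G : Type*) [AddCommGroup G] : Subgroup (Equiv.Perm G) where
  carrier := {σ | ∃ g : G, σ = Equiv.addRight g}
  one_mem' := ⟨0, by ext x; simp⟩
  mul_mem' := by
    rintro σ τ ⟨g, rfl⟩ ⟨h, rfl⟩
    exact ⟨h + g, by ext x; simp [add_assoc]⟩
  inv_mem' := by
    rintro σ ⟨g, rfl⟩
    exact ⟨-g, by ext x; simp⟩

/-!
Write `G` as a direct sum of nonzero cyclic groups generated by `e 0, e 1, …`, with the generators
of order two last. Colour the pair `{x, y}` according to whether `x - y` is `±e 0`, or the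
difference of two consecutive generators, or `±e i` for some `i > 0`, or none of these. A
colour-preserving permutation `σ` with `σ 0 = 0` permutes the `±e i` and fixes or negates `e 0`. If it
fixes `e 0`, it fixes every `±e i`, by walking along the path of generators: `e (i + 1)` must go
to some `±e k` at a consecutive difference from `e i`, and `e (i - 1)` is already taken. Thus,
near every point, an automorphism acts either as a translation or as a reflection. The type does
not change from a point to its neighbours, so it acts globally as one or the other.
-/

section Cayley

variable {G κ : Type*} [AddCommGroup G]

/-- The colouring of the pairs of elements of `G` in which `{x, y}` gets the colour `c (x - y)`,
for an even colouring `c` of the elements of `G`. -/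
def cayleyColoring (c : G → κ) (hc : ∀ x, c (-x) = c x) : Sym2 G → κ :=
  Sym2.lift ⟨fun x y => c (x - y), fun x y => by simpa using hc (y - x)⟩

/-- The permutations of `G` that preserve the colours of all differences. When `c` is even this is
the automorphism group of `cayleyColoring c`. -/
def cayleyAut (c : G → κ) : Subgroup (Equiv.Perm G) where
  carrier := {σ | ∀ x y, c (σ x - σ y) = c (x - y)}
  one_mem' _ _ := rfl
  mul_mem' {σ τ} hσ hτ x y := (hσ (τ x) (τ y)).trans (hτ x y)
  inv_mem' {σ} hσ x y := by simpa using (hσ (σ⁻¹ x) (σ⁻¹ y)).symm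

theorem apply_eq_of_mem_cayleyAut {c : G → κ} {σ : Equiv.Perm G} (hσ : σ ∈ cayleyAut c)
    (hσ0 : σ 0 = 0) (x : G) : c (σ x) = c x := by
  simpa [hσ0] using hσ x 0

theorem isColGraphAutGroup_cayleyColoring {k : ℕ} (c : G → Fin k) (hc : ∀ x, c (-x) = c x) :
    IsColGraphAutGroup (cayleyColoring c hc) (cayleyAut c) := by
  refine fun σ => ⟨fun hσ x y _ => hσ x y, fun hσ x y => ?_⟩
  obtain rfl | hxy := eq_or_ne x y
  · simp only [sub_self]
  · exact hσ x y hxy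

theorem addRight_mem_cayleyAut (c : G → κ) (g : G) :
    Equiv.addRight g ∈ cayleyAut c := fun x y => by
  simp only [Equiv.coe_addRight, add_sub_add_right_eq_sub]

theorem neg_mem_cayleyAut {c : G → κ} (hc : ∀ x, c (-x) = c x) :
    Equiv.neg G ∈ cayleyAut c := fun x y => by
  simp only [Equiv.neg_apply, neg_sub_neg, ← hc (x - y), neg_sub]

theorem neg_mul_mul_neg_mem_cayleyAut {c : G → κ} (hc : ∀ x, c (-x) = c x) {σ : Equiv.Perm G}
    (hσ : σ ∈ cayleyAut c) : Equiv.neg G * σ * Equiv.neg G ∈ cayleyAut c :=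
  mul_mem (mul_mem (neg_mem_cayleyAut hc) hσ) (neg_mem_cayleyAut hc)

theorem closure_neg_addRight_le_cayleyAut {c : G → κ} (hc : ∀ x, c (-x) = c x) :
    Subgroup.closure (insert (Equiv.neg G) {σ : Equiv.Perm G | ∃ g : G, σ = Equiv.addRight g}) ≤
      cayleyAut c := by
  rw [Subgroup.closure_le]
  rintro σ (rfl | ⟨g, rfl⟩)
  · exact neg_mem_cayleyAut hc
  · exact addRight_mem_cayleyAut c g

end Cayley

section Independent

open AddSubgroup

variable {G ι : Type*} [AddCommGroup G] {e : ι → G}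

theorem mem_iSup_zmultiples_of_ne {i j : ι} (hij : i ≠ j) :
    e i ∈ ⨆ (k) (_ : k ≠ j), zmultiples (e k) :=
  mem_iSup_of_mem i (mem_iSup_of_mem hij (mem_zmultiples _))

theorem eq_of_eq_or_eq_neg (he : iSupIndep fun i => zmultiples (e i)) (h0 : ∀ i, e i ≠ 0)
    {i j : ι} (h : e i = e j ∨ e i = -e j) : i = j := by
  have hmem : e i ∈ zmultiples (e j) := by
    rcases h with h | h <;> simp [h]
  by_contra hij
  exact h0 i (disjoint_def.mp (he.pairwiseDisjoint hij) (mem_zmultiples _) hmem)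

theorem sub_ne_and_sub_ne_neg (he : iSupIndep fun i => zmultiples (e i)) (h0 : ∀ i, e i ≠ 0)
    {i j : ι} (hij : i ≠ j) (k : ι) : e i - e j ≠ e k ∧ e i - e j ≠ -e k := by
  have notMem (l : ι) : e l ∉ ⨆ (m) (_ : m ≠ l), zmultiples (e m) := fun h =>
    h0 l (disjoint_def.mp (he l) (mem_zmultiples _) h)
  by_cases hki : k = i
  · subst hki
    refine ⟨fun h => h0 j (by simpa using h), fun h => notMem j ?_⟩
    rw [sub_eq_iff_eq_add', ← sub_eq_iff_eq_add, sub_neg_eq_add] at h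
    rw [← h]
    exact add_mem (mem_iSup_zmultiples_of_ne hij) (mem_iSup_zmultiples_of_ne hij)
  · constructor <;> intro h <;> refine notMem i ?_ <;> rw [sub_eq_iff_eq_add.mp h]
    · exact add_mem (mem_iSup_zmultiples_of_ne hki) (mem_iSup_zmultiples_of_ne hij.symm)
    · exact add_mem (neg_mem (mem_iSup_zmultiples_of_ne hki))
        (mem_iSup_zmultiples_of_ne hij.symm)

theorem eq_and_eq_of_sub_eq_sub (he : iSupIndep fun i => zmultiples (e i)) (h0 : ∀ i, e i ≠ 0)
    {i k a b : ι} (hab : a ≠ b) {x : G} (hx : x = e k ∨ x = -e k) (h : x - e i = e a - e b) :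
    (k = a ∧ i = b ∧ x = e k) ∨ (k = b ∧ i = a ∧ x = -e k ∧ 2 • e i = 0) := by
  by_cases hib : i = b
  · subst hib
    obtain rfl : x = e a := sub_left_injective h
    obtain rfl : a = k := eq_of_eq_or_eq_neg he h0 hx
    exact Or.inl ⟨rfl, rfl, rfl⟩
  have hsum : e b + x = e i + e a := by
    rw [sub_eq_sub_iff_add_eq_add] at h
    rw [add_comm, h, add_comm]
  have hrest : e i + e a ∈ ⨆ (j) (_ : j ≠ b), zmultiples (e j) :=
    add_mem (mem_iSup_zmultiples_of_ne hib) (mem_iSup_zmultiples_of_ne hab)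
  by_cases hkb : k = b
  · subst hkb
    have hmem : e k + x ∈ zmultiples (e k) := by
      refine add_mem (mem_zmultiples _) ?_
      rcases hx with rfl | rfl <;> simp
    have hzero : e k + x = 0 := disjoint_def.mp (he k) hmem (hsum ▸ hrest)
    rw [hsum] at hzero
    obtain rfl : i = a := eq_of_eq_or_eq_neg he h0 (Or.inr (eq_neg_of_add_eq_zero_left hzero))
    exact Or.inr ⟨rfl, rfl, eq_neg_of_add_eq_zero_right (hsum.trans hzero), by rwa [two_nsmul]⟩
  · have hxmem : x ∈ ⨆ (j) (_ : j ≠ b), zmultiples (e j) := by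
      rcases hx with rfl | rfl
      · exact mem_iSup_zmultiples_of_ne hkb
      · exact neg_mem (mem_iSup_zmultiples_of_ne hkb)
    refine absurd (disjoint_def.mp (he b) (mem_zmultiples _) ?_) (h0 b)
    rw [eq_sub_of_add_eq hsum]
    exact sub_mem hrest hxmem

end Independent

section PathColor

open AddSubgroup SimpleGraph

variable {G ι : Type*} [AddCommGroup G]

/-- The elements `e i` and `-e i` of a family `e`. -/
def signedRange (e : ι → G) : Set G :=
  {x | ∃ i, x = e i ∨ x = -e i}

/-- The differences of consecutive members of a family, in both orders. -/
def consecutiveDifferences [Preorder ι] (e : ι → G) : Set G :=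
  {x | ∃ i j, (hasse ι).Adj i j ∧ x = e i - e j}

theorem neg_mem_signedRange_iff {e : ι → G} {x : G} :
    -x ∈ signedRange e ↔ x ∈ signedRange e := by
  simp only [signedRange, Set.mem_ofPred_eq, neg_eq_iff_eq_neg, neg_neg, or_comm]

theorem neg_mem_consecutiveDifferences_iff [Preorder ι] {e : ι → G} {x : G} :
    -x ∈ consecutiveDifferences e ↔ x ∈ consecutiveDifferences e := by
  have neg_mem {y : G} : y ∈ consecutiveDifferences e → -y ∈ consecutiveDifferences e := by
    rintro ⟨i, j, hij, rfl⟩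
    exact ⟨j, i, hij.symm, neg_sub _ _⟩
  exact ⟨fun h => neg_neg x ▸ neg_mem h, neg_mem⟩

theorem disjoint_consecutiveDifferences_signedRange [Preorder ι] {e : ι → G}
    (he : iSupIndep fun i => zmultiples (e i)) (h0 : ∀ i, e i ≠ 0) :
    Disjoint (consecutiveDifferences e) (signedRange e) := by
  rw [Set.disjoint_left]
  rintro x ⟨i, j, hij, rfl⟩ ⟨k, hk | hk⟩
  · exact (sub_ne_and_sub_ne_neg he h0 hij.ne k).1 hk
  · exact (sub_ne_and_sub_ne_neg he h0 hij.ne k).2 hk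

variable [Preorder ι] [OrderBot ι] {e : ι → G}

open Classical in
/-- The colouring of the elements of `G` that realises `A⁺`: the four colours single out the first
generator up to sign, the differences of consecutive generators, the remaining generators up to
sign, and everything else. -/
noncomputable def pathColor (e : ι → G) (x : G) : Fin 4 :=
  if x = e ⊥ ∨ x = -e ⊥ then 3
  else if x ∈ consecutiveDifferences e then 2
  else if x ∈ signedRange e then 1
  else 0

theorem pathColor_neg (e : ι → G) (x : G) : pathColor e (-x) = pathColor e x := by
  classical
  have hbot : -x = e ⊥ ∨ -x = -e ⊥ ↔ x = e ⊥ ∨ x = -e ⊥ := by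
    rw [neg_eq_iff_eq_neg, neg_inj, or_comm]
  exact if_congr hbot rfl (if_congr neg_mem_consecutiveDifferences_iff rfl
    (if_congr neg_mem_signedRange_iff rfl rfl))

theorem pathColor_eq_three_iff {x : G} : pathColor e x = 3 ↔ x = e ⊥ ∨ x = -e ⊥ := by
  unfold pathColor
  split_ifs <;> simp_all

theorem pathColor_eq_two_iff (he : iSupIndep fun i => zmultiples (e i)) (h0 : ∀ i, e i ≠ 0)
    {x : G} : pathColor e x = 2 ↔ x ∈ consecutiveDifferences e := by
  have hbot (h : x = e ⊥ ∨ x = -e ⊥) : x ∉ consecutiveDifferences e := fun hx =>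
    Set.disjoint_left.mp (disjoint_consecutiveDifferences_signedRange he h0) hx ⟨⊥, h⟩
  unfold pathColor
  split_ifs <;> simp_all

theorem pathColor_eq_one_or_three_iff (he : iSupIndep fun i => zmultiples (e i))
    (h0 : ∀ i, e i ≠ 0) {x : G} :
    pathColor e x = 1 ∨ pathColor e x = 3 ↔ x ∈ signedRange e := by
  have hbot (h : x = e ⊥ ∨ x = -e ⊥) : x ∈ signedRange e := ⟨⊥, h⟩
  have hdisj : x ∈ consecutiveDifferences e → x ∉ signedRange e := fun hx =>
    Set.disjoint_left.mp (disjoint_consecutiveDifferences_signedRange he h0) hx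
  unfold pathColor
  split_ifs <;> simp_all

variable {σ : Equiv.Perm G}

theorem apply_mem_signedRange (he : iSupIndep fun i => zmultiples (e i)) (h0 : ∀ i, e i ≠ 0)
    (hσ : σ ∈ cayleyAut (pathColor e)) (hσ0 : σ 0 = 0) {x : G} (hx : x ∈ signedRange e) :
    σ x ∈ signedRange e := by
  rwa [← pathColor_eq_one_or_three_iff he h0, apply_eq_of_mem_cayleyAut hσ hσ0,
    pathColor_eq_one_or_three_iff he h0]

theorem apply_neg_bot (hσ : σ ∈ cayleyAut (pathColor e)) (hσ0 : σ 0 = 0)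
    (hbot : σ (e ⊥) = e ⊥) : σ (-e ⊥) = -e ⊥ := by
  have hpm : σ (-e ⊥) = e ⊥ ∨ σ (-e ⊥) = -e ⊥ := by
    rw [← pathColor_eq_three_iff, apply_eq_of_mem_cayleyAut hσ hσ0, pathColor_eq_three_iff]
    exact Or.inr rfl
  refine hpm.elim (fun h => ?_) id
  rw [h]
  exact (σ.injective (h.trans hbot.symm)).symm

end PathColor

section Rigidity

open AddSubgroup SimpleGraph

variable {G ι : Type*} [AddCommGroup G] {e : ι → G} {σ : Equiv.Perm G}

/-- `σ` acts as a translation on `x` and on all `x + e i` and `x - e i`. -/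
def IsTranslationNear (e : ι → G) (σ : Equiv.Perm G) (x : G) : Prop :=
  ∀ y ∈ signedRange e, σ (x + y) = σ x + y

theorem apply_add_eq_sub_of_isTranslationNear_neg_mul {x y : G}
    (hx : IsTranslationNear e (Equiv.neg G * σ) x) (hy : y ∈ signedRange e) :
    σ (x + y) = σ x - y := by
  have h : -σ (x + y) = -σ x + y := hx y hy
  rw [neg_eq_iff_eq_neg.mp h, neg_add, neg_neg, sub_eq_add_neg]

variable [LinearOrder ι] [OrderBot ι]

/-- The image `±e k` of `e j` is at a consecutive difference from `e i`, so `k` is `j` or the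
predecessor of `i`; the latter is excluded as `±e k` is already taken. A wrong sign `-e j` forces
`2 • e i = 0`, hence `2 • e j = 0` by the ordering of the generators, and the sign is immaterial. -/
theorem apply_of_covBy (he : iSupIndep fun i => zmultiples (e i)) (h0 : ∀ i, e i ≠ 0)
    (h2 : Monotone fun i => 2 • e i = 0) (hσ : σ ∈ cayleyAut (pathColor e)) (hσ0 : σ 0 = 0)
    {i j : ι} (hij : i ⋖ j) (hfix : ∀ k < j, σ (e k) = e k ∧ σ (-e k) = -e k) :
    σ (e j) = e j := by
  obtain ⟨k, hk⟩ : σ (e j) ∈ signedRange e := apply_mem_signedRange he h0 hσ hσ0 ⟨j, Or.inl rfl⟩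
  have hjk : ¬ k < j := fun hkj => by
    refine hkj.ne' (eq_of_eq_or_eq_neg he h0 (hk.imp (fun h => ?_) fun h => ?_)) <;>
      apply σ.injective
    · rw [h, (hfix k hkj).1]
    · rw [h, (hfix k hkj).2]
  have hdiff : σ (e j) - e i ∈ consecutiveDifferences e := by
    have hcolor := hσ (e j) (e i)
    rw [(hfix i hij.lt).1] at hcolor
    rw [← pathColor_eq_two_iff he h0, hcolor, pathColor_eq_two_iff he h0]
    exact ⟨j, i, hasse_adj.mpr (Or.inr hij), rfl⟩
  obtain ⟨a, b, hab, h⟩ := hdiff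
  have eq_of_adj (hki : (hasse ι).Adj k i) : k = j := by
    rcases hasse_adj.mp hki with hki | hik
    · exact absurd (hki.lt.trans hij.lt) hjk
    · exact hik.unique_right hij
  rcases eq_and_eq_of_sub_eq_sub he h0 hab.ne hk h with
    ⟨rfl, rfl, hsign⟩ | ⟨rfl, rfl, hsign, htwo⟩
  · rwa [eq_of_adj hab] at hsign
  · obtain rfl := eq_of_adj hab.symm
    have htwo' : 2 • e k = 0 := h2 hij.le htwo
    rw [hsign, neg_eq_iff_add_eq_zero, ← two_nsmul, htwo']

theorem apply_generator_eq [PredOrder ι] [WellFoundedLT ι]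
    (he : iSupIndep fun i => zmultiples (e i)) (h0 : ∀ i, e i ≠ 0)
    (h2 : Monotone fun i => 2 • e i = 0) (hσ : σ ∈ cayleyAut (pathColor e)) (hσ0 : σ 0 = 0)
    (hbot : σ (e ⊥) = e ⊥) (j : ι) : σ (e j) = e j ∧ σ (-e j) = -e j := by
  induction j using WellFoundedLT.induction with
  | ind j ih =>
    obtain rfl | hj := eq_or_ne j ⊥
    · exact ⟨hbot, apply_neg_bot hσ hσ0 hbot⟩
    have hcov : Order.pred j ⋖ j := Order.pred_covBy_of_not_isMin (by rwa [isMin_iff_eq_bot])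
    refine ⟨apply_of_covBy he h0 h2 hσ hσ0 hcov ih, ?_⟩
    have hconj := apply_of_covBy he h0 h2 (neg_mul_mul_neg_mem_cayleyAut (pathColor_neg e) hσ)
      (by simp [hσ0]) hcov fun k hk => by simp [ih k hk]
    simpa [neg_eq_iff_eq_neg] using hconj

theorem isTranslationNear_of_apply_add_bot [PredOrder ι] [WellFoundedLT ι]
    (he : iSupIndep fun i => zmultiples (e i)) (h0 : ∀ i, e i ≠ 0)
    (h2 : Monotone fun i => 2 • e i = 0) (hσ : σ ∈ cayleyAut (pathColor e)) {x : G}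
    (hx : σ (x + e ⊥) = σ x + e ⊥) : IsTranslationNear e σ x := by
  let τ : Equiv.Perm G := Equiv.addRight (-σ x) * σ * Equiv.addRight x
  have hτ_apply (y : G) : τ y = σ (x + y) - σ x := by
    simp [τ, add_comm y, sub_eq_add_neg]
  have hτ : τ ∈ cayleyAut (pathColor e) :=
    mul_mem (mul_mem (addRight_mem_cayleyAut _ _) hσ) (addRight_mem_cayleyAut _ _)
  have hfix := apply_generator_eq he h0 h2 hτ (by simp [hτ_apply]) (by simp [hτ_apply, hx])
  simp only [hτ_apply, sub_eq_iff_eq_add'] at hfix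
  rintro _ ⟨i, rfl | rfl⟩
  exacts [(hfix i).1, (hfix i).2]

theorem isTranslationNear_or_isTranslationNear_neg_mul [PredOrder ι] [WellFoundedLT ι]
    (he : iSupIndep fun i => zmultiples (e i)) (h0 : ∀ i, e i ≠ 0)
    (h2 : Monotone fun i => 2 • e i = 0) (hσ : σ ∈ cayleyAut (pathColor e)) (x : G) :
    IsTranslationNear e σ x ∨ IsTranslationNear e (Equiv.neg G * σ) x := by
  have hbot : σ (x + e ⊥) - σ x = e ⊥ ∨ σ (x + e ⊥) - σ x = -e ⊥ := by
    rw [← pathColor_eq_three_iff, hσ, add_sub_cancel_left, pathColor_eq_three_iff]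
    exact Or.inl rfl
  refine hbot.imp (fun h => ?_) fun h => ?_
  · exact isTranslationNear_of_apply_add_bot he h0 h2 hσ (sub_eq_iff_eq_add'.mp h)
  · refine isTranslationNear_of_apply_add_bot he h0 h2
      (mul_mem (neg_mem_cayleyAut (pathColor_neg e)) hσ) ?_
    simp [sub_eq_iff_eq_add'.mp h, add_comm]

/-- If `σ` acts near `x + y` as a reflection, then going back to `x` shows `-y = y`, so that `σ`
adds `y` at every neighbour of `x`; hence it acts near `x + y` as a translation after all. -/
theorem IsTranslationNear.add [PredOrder ι] [WellFoundedLT ι]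
    (he : iSupIndep fun i => zmultiples (e i)) (h0 : ∀ i, e i ≠ 0)
    (h2 : Monotone fun i => 2 • e i = 0) (hσ : σ ∈ cayleyAut (pathColor e)) {x y : G}
    (hx : IsTranslationNear e σ x) (hy : y ∈ signedRange e) : IsTranslationNear e σ (x + y) := by
  have dichotomy := isTranslationNear_or_isTranslationNear_neg_mul he h0 h2 hσ
  rcases dichotomy (x + y) with htrans | hrefl
  · exact htrans
  have hy_neg : -y = y := by
    have hback := apply_add_eq_sub_of_isTranslationNear_neg_mul hrefl
      (neg_mem_signedRange_iff.mpr hy)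
    rw [add_neg_cancel_right, hx y hy, sub_neg_eq_add, add_assoc, left_eq_add] at hback
    exact neg_eq_of_add_eq_zero_left hback
  have hadd (z : G) : σ (x + z + y) = σ (x + z) + y := by
    rcases dichotomy (x + z) with h | h
    · exact h y hy
    · rw [apply_add_eq_sub_of_isTranslationNear_neg_mul h hy, sub_eq_add_neg, hy_neg]
  intro z hz
  rw [add_right_comm, hadd z, hx z hz, hx y hy, add_right_comm]

theorem eq_addRight_of_isTranslationNear_zero [PredOrder ι] [WellFoundedLT ι]
    (he : iSupIndep fun i => zmultiples (e i)) (htop : ⨆ i, zmultiples (e i) = ⊤)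
    (h0 : ∀ i, e i ≠ 0) (h2 : Monotone fun i => 2 • e i = 0)
    (hσ : σ ∈ cayleyAut (pathColor e)) (hzero : IsTranslationNear e σ 0) :
    σ = Equiv.addRight (σ 0) := by
  have hclosure (x : G) : x ∈ closure (Set.range e) := by
    simp_rw [zmultiples_eq_closure, ← AddSubgroup.closure_iUnion,
      Set.iUnion_singleton_eq_range] at htop
    exact htop ▸ mem_top x
  have htrans (x : G) : IsTranslationNear e σ x ∧ σ x = x + σ 0 := by
    induction hclosure x using closure_induction_right with
    | zero => exact ⟨hzero, (zero_add _).symm⟩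
    | add_right x _ y hy ih =>
      obtain ⟨i, rfl⟩ := hy
      have hi : e i ∈ signedRange e := ⟨i, Or.inl rfl⟩
      exact ⟨ih.1.add he h0 h2 hσ hi, by rw [ih.1 _ hi, ih.2, add_right_comm]⟩
    | add_neg_cancel x _ y hy ih =>
      obtain ⟨i, rfl⟩ := hy
      have hi : -e i ∈ signedRange e := ⟨i, Or.inr rfl⟩
      exact ⟨ih.1.add he h0 h2 hσ hi, by rw [ih.1 _ hi, ih.2, add_right_comm]⟩
  exact Equiv.ext fun x => (htrans x).2

theorem cayleyAut_pathColor [PredOrder ι] [WellFoundedLT ι]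
    (he : iSupIndep fun i => zmultiples (e i)) (htop : ⨆ i, zmultiples (e i) = ⊤)
    (h0 : ∀ i, e i ≠ 0) (h2 : Monotone fun i => 2 • e i = 0) :
    cayleyAut (pathColor e) = Subgroup.closure
      (insert (Equiv.neg G) {σ : Equiv.Perm G | ∃ g : G, σ = Equiv.addRight g}) := by
  refine le_antisymm (fun σ hσ => ?_) (closure_neg_addRight_le_cayleyAut (pathColor_neg e))
  have hneg : Equiv.neg G ∈ Subgroup.closure
      (insert (Equiv.neg G) {σ : Equiv.Perm G | ∃ g : G, σ = Equiv.addRight g}) :=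
    Subgroup.subset_closure (Set.mem_insert _ _)
  rcases isTranslationNear_or_isTranslationNear_neg_mul he h0 h2 hσ 0 with h | h
  · rw [eq_addRight_of_isTranslationNear_zero he htop h0 h2 hσ h]
    exact Subgroup.subset_closure (Or.inr ⟨_, rfl⟩)
  · rw [← Subgroup.mul_mem_cancel_left _ hneg, eq_addRight_of_isTranslationNear_zero he htop h0 h2
      (mul_mem (neg_mem_cayleyAut (pathColor_neg e)) hσ) h]
    exact Subgroup.subset_closure (Or.inr ⟨_, rfl⟩)

end Rigidity

section Generators

open AddSubgroup

theorem exists_equiv_fin_monotone {κ α : Type*} [Fintype κ] [LinearOrder α] (f : κ → α) :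
    ∃ g : Fin (Fintype.card κ) ≃ κ, Monotone (f ∘ g) := by
  let g := (Fintype.equivFin κ).symm
  exact ⟨(Tuple.sort (f ∘ g)).trans g, Tuple.monotone_sort (f ∘ g)⟩

theorem exists_addEquiv_pi_zmod (G : Type*) [AddCommGroup G] [AddGroup.FG G] :
    ∃ (κ : Type) (_ : Fintype κ) (n : κ → ℕ), Nonempty (G ≃+ ∀ i, ZMod (n i)) := by
  classical
  obtain ⟨r, κ, _, p, -, m, ⟨φ⟩⟩ := AddCommGroup.equiv_free_prod_directSum_zmod G
  refine ⟨Fin r ⊕ κ, inferInstance, Sum.elim (fun _ => 0) fun i => p i ^ m i, ⟨?_⟩⟩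
  refine φ.trans ((Finsupp.addEquivFunOnFinite.prodCongr (DirectSum.addEquivProd _)).trans ?_)
  exact (LinearEquiv.sumPiEquivProdPi ℤ (Fin r) κ fun i =>
    ZMod (Sum.elim (fun _ => 0) (fun i => p i ^ m i) i)).symm.toAddEquiv

variable {G κ : Type*} [AddCommGroup G] [DecidableEq κ] {n : κ → ℕ}

theorem iSupIndep_zmultiples_symm_single (φ : G ≃+ ∀ i, ZMod (n i)) :
    iSupIndep fun i => zmultiples (φ.symm (Pi.single i 1)) := by
  refine fun i => disjoint_def.mpr ?_
  intro x hx hrest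
  have hle : ⨆ (j) (_ : j ≠ i), zmultiples (φ.symm (Pi.single j 1)) ≤
      ((Pi.evalAddMonoidHom _ i).comp φ.toAddMonoidHom).ker := by
    simp only [iSup_le_iff, zmultiples_le, AddMonoidHom.mem_ker]
    intro j hj
    simp [Pi.single_eq_of_ne' hj]
  have hcoord : φ x i = 0 := hle hrest
  obtain ⟨m, rfl⟩ := mem_zmultiples_iff.mp hx
  rw [← φ.map_eq_zero_iff]
  ext j
  obtain rfl | hj := eq_or_ne j i
  · exact hcoord
  · simp [hj]

theorem iSup_zmultiples_symm_single [Finite κ] (φ : G ≃+ ∀ i, ZMod (n i)) :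
    ⨆ i, zmultiples (φ.symm (Pi.single i 1)) = ⊤ := by
  have := Fintype.ofFinite κ
  refine eq_top_iff.mpr fun x _ => ?_
  have hx : x = ∑ i, φ.symm (Pi.single i (φ x i)) := by
    rw [← map_sum, Finset.univ_sum_single, φ.symm_apply_apply]
  rw [hx]
  refine sum_mem fun i _ => mem_iSup_of_mem i ?_
  obtain ⟨m, hm⟩ := ZMod.intCast_surjective (φ x i)
  refine mem_zmultiples_iff.mpr ⟨m, ?_⟩
  rw [← map_zsmul, ← Pi.single_smul, zsmul_one, hm]

theorem exists_monotone_two_nsmul_generators (G : Type*) [AddCommGroup G] [AddGroup.FG G] :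
    ∃ (r : ℕ) (e : Fin r → G), (iSupIndep fun i => zmultiples (e i)) ∧
      ⨆ i, zmultiples (e i) = ⊤ ∧ (∀ i, e i ≠ 0) ∧ Monotone fun i => 2 • e i = 0 := by
  classical
  obtain ⟨κ, _, n, ⟨φ⟩⟩ := exists_addEquiv_pi_zmod G
  let b (i : κ) : G := φ.symm (Pi.single i 1)
  obtain ⟨g, hg⟩ := exists_equiv_fin_monotone fun i : {i // zmultiples (b i) ≠ ⊥} => 2 • b i = 0
  refine ⟨_, fun i => b (g i), ?_, ?_, fun i => ?_, hg⟩
  · exact (iSupIndep_zmultiples_symm_single φ).comp (Subtype.val_injective.comp g.injective)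
  · rw [g.iSup_comp (g := fun i => zmultiples (b i.1)), iSup_ne_bot_subtype]
    exact iSup_zmultiples_symm_single φ
  · exact mt zmultiples_eq_bot.mpr (g i).2

end Generators

theorem statement14_general (G : Type*) [AddCommGroup G] [AddGroup.FG G] :
    InGR4 (Subgroup.closure
      (insert (Equiv.neg G) {σ : Equiv.Perm G | ∃ g : G, σ = Equiv.addRight g})) := by
  obtain ⟨r, e, he, htop, h0, h2⟩ := exists_monotone_two_nsmul_generators G
  obtain rfl | hr := eq_or_ne r 0
  · have : Subsingleton G := by
      rw [iSup_of_empty] at htop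
      exact AddSubgroup.subsingleton_iff.mp (subsingleton_of_bot_eq_top htop)
    exact ⟨fun _ => 0, fun σ => by simp [Subsingleton.elim σ 1, one_mem]⟩
  · have : NeZero r := ⟨hr⟩
    rw [← cayleyAut_pathColor he htop h0 h2]
    exact ⟨_, isColGraphAutGroup_cayleyColoring _ (pathColor_neg e)⟩

/-- For a finite abelian group `G`, the subgroup `A⁺` of `Sym(G)` generated by all
translations together with the involution `x ↦ -x` is the automorphism group of a
4-coloured graph on `G`. -/
theorem statement14 (G : Type*) [AddCommGroup G] [Fintype G] :
    InGR4 (Subgroup.closure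
      (insert (Equiv.neg G) {σ : Equiv.Perm G | ∃ g : G, σ = Equiv.addRight g})) :=
  statement14_general G
end
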